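/- arXiv:math/0511156 — 3 statements merged into one kernel-verified Lean document; each statement's English description precedes it below -/
import Mathlib

section
/- Let N ≥ 3, let V satisfy condition (V), and let f satisfy conditions (f1), (f2), (f3). Then for every λ > Λ there exists a function u ∈ C²(ℝ^N) with u > 0 on ℝ^N satisfying −Δu = λ(V(x)u − f(u)) on all of ℝ^N (no decay at infinity is asserted). -/
open MeasureTheory Filter Metric Set
open scoped ENNReal NNReal Topology

noncomputable section

/-- Euclidean space `ℝ^N`. -/
abbrev Euc (N : ℕ) := EuclideanSpace ℝ (Fin N)

/-- The Laplace operator on `ℝ^N`: the sum of the second partial derivatives. -/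
def lap (N : ℕ) (u : Euc N → ℝ) (x : Euc N) : ℝ :=
  ∑ i : Fin N,
    fderiv ℝ (fun y => fderiv ℝ u y (EuclideanSpace.single i 1)) x (EuclideanSpace.single i 1)

/-- The principal eigenvalue `λ₁(R)`: the infimum of `∫_{B_R} |∇u|²` over smooth functions
compactly supported in the open ball `B_R` with `∫_{B_R} V u² = 1`. -/
def lam1 (N : ℕ) (V : Euc N → ℝ) (R : ℝ) : ℝ :=
  sInf { t : ℝ | ∃ u : Euc N → ℝ, ContDiff ℝ (⊤ : ℕ∞) u ∧ HasCompactSupport u ∧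
    tsupport u ⊆ ball (0 : Euc N) R ∧
    (∫ x, V x * u x ^ 2) = 1 ∧ t = ∫ x, ‖gradient u x‖ ^ 2 }

/-- `Λ := lim_{R → ∞} λ₁(R)`. -/
def Lam (N : ℕ) (V : Euc N → ℝ) : ℝ := limUnder atTop (lam1 N V)

/-- Condition (V): `V` is a bounded Hölder-continuous function whose positive part
`V⁺ = max(V, 0)` is nontrivial and decomposes as `V₁ + V₂` with `V₁ ∈ L^{N/2}` and
`|x|² V₂(x) → 0` as `|x| → ∞`. -/
def CondV (N : ℕ) (V V₁ V₂ : Euc N → ℝ) : Prop :=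
  (∃ C β : ℝ≥0, 0 < β ∧ β ≤ 1 ∧ HolderWith C β V) ∧
  (∃ C : ℝ, ∀ x, |V x| ≤ C) ∧
  (∃ x, 0 < V x) ∧
  (∀ x, max (V x) 0 = V₁ x + V₂ x) ∧
  MemLp V₁ ((N : ℝ≥0∞) / 2) volume ∧
  Tendsto (fun x : Euc N => ‖x‖ ^ 2 * V₂ x) (cocompact _) (𝓝 0)

/-- The decay condition: `V⁺(x) ≤ A |x|^{-2-α}`. -/
def CondVDecay (N : ℕ) (V : Euc N → ℝ) : Prop :=
  ∃ A α : ℝ, 0 < A ∧ 0 < α ∧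
    ∀ x : Euc N, x ≠ 0 → max (V x) 0 ≤ A * ‖x‖ ^ (-2 - α)

/-- Conditions (f1), (f2), (f3) on the absorption term `f`. -/
def CondF (N : ℕ) (V : Euc N → ℝ) (f : ℝ → ℝ) : Prop :=
  ContDiff ℝ 1 f ∧ (∀ u : ℝ, 0 ≤ u → 0 ≤ f u) ∧
  -- (f1)
  f 0 = 0 ∧ deriv f 0 = 0 ∧
  0 < Filter.liminf (fun u : ℝ => ((deriv f u / u : ℝ) : EReal)) (𝓝[>] (0 : ℝ)) ∧
  -- (f2)
  StrictMonoOn (fun u : ℝ => f u / u) (Ioi 0) ∧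
  -- (f3)
  (∃ L : EReal, Tendsto (fun u : ℝ => ((f u / u : ℝ) : EReal)) atTop (𝓝 L) ∧
    ((⨆ x, |V x| : ℝ) : EReal) < L)

/-- A solution of problem `(P_λ)`: a positive `C²` function solving the logistic equation
and decaying to zero at infinity. -/
structure IsSolution (N : ℕ) (V : Euc N → ℝ) (f : ℝ → ℝ) (lam : ℝ) (u : Euc N → ℝ) : Prop where
  smooth : ContDiff ℝ 2 u
  pos : ∀ x, 0 < u x
  eqn : ∀ x, -lap N u x = lam * (V x * u x - f (u x))
  decay : Tendsto u (cocompact (Euc N)) (𝓝 0)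

/-- The surface integral `∫_{∂B_R} g dσ` over the sphere of radius `R`, written in polar
coordinates with respect to the canonical surface measure on the unit sphere. -/
def sphereInt (N : ℕ) (g : Euc N → ℝ) (R : ℝ) : ℝ :=
  ∫ ω : sphere (0 : Euc N) 1, g (R • (ω : Euc N)) * R ^ (N - 1)
    ∂((volume : Measure (Euc N)).toSphere)


set_option maxSynthPendingDepth 3
set_option linter.unusedSectionVars false

section kernels
variable {N : ℕ} {F : Type*} [NormedAddCommGroup F] [NormedSpace ℝ F]

/-- Polynomial decay of a kernel, strong enough for integrability. -/
def Decay (k : Euc N → F) : Prop :=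
  ∃ C : ℝ, ∀ z, ‖k z‖ ≤ C * (1 + ‖z‖) ^ (-((N : ℝ) + 1))

lemma integrable_dec : Integrable (fun z : Euc N => (1 + ‖z‖) ^ (-((N : ℝ) + 1))) volume := by
  apply integrable_one_add_norm
  simp

lemma Decay.integrable {k : Euc N → F} (hk : Decay k) (hc : Continuous k) :
    Integrable k volume := by
  obtain ⟨C, hC⟩ := hk
  exact (integrable_dec.const_mul C).mono' hc.aestronglyMeasurable (Eventually.of_forall hC)

lemma Decay.nonneg_const {k : Euc N → F} (hk : Decay k) :
    ∃ C : ℝ, 0 ≤ C ∧ ∀ z, ‖k z‖ ≤ C * (1 + ‖z‖) ^ (-((N : ℝ) + 1)) := by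
  obtain ⟨C, hC⟩ := hk
  refine ⟨C, ?_, hC⟩
  have := (norm_nonneg _).trans (hC 0)
  simpa using this

lemma dec_shift (y ξ ξ₀ : Euc N) (h : ‖ξ - ξ₀‖ ≤ 1) :
    (1 + ‖y + ξ‖) ^ (-((N : ℝ) + 1)) ≤
      2 ^ ((N : ℝ) + 1) * (1 + ‖y + ξ₀‖) ^ (-((N : ℝ) + 1)) := by
  have h1 : 1 + ‖y + ξ₀‖ ≤ 2 * (1 + ‖y + ξ‖) := by
    have : ‖y + ξ₀‖ ≤ ‖y + ξ‖ + ‖ξ - ξ₀‖ := by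
      calc ‖y + ξ₀‖ = ‖(y + ξ) - (ξ - ξ₀)‖ := by congr 1; abel
        _ ≤ _ := norm_sub_le _ _
    have := norm_nonneg (y + ξ)
    linarith
  have p0 : 0 < 1 + ‖y + ξ₀‖ := by positivity
  have p1 : 0 < 1 + ‖y + ξ‖ := by positivity
  rw [Real.rpow_neg p0.le, Real.rpow_neg p1.le, ← div_eq_mul_inv, le_div_iff₀ (by positivity),
    ← div_eq_inv_mul, div_le_iff₀ (by positivity), ← Real.mul_rpow (by norm_num) p1.le]
  exact Real.rpow_le_rpow p0.le h1 (by positivity)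

lemma hasFDerivAt_shift {g : Euc N → ℝ} (hg : Measurable g) {B : ℝ} (hB : ∀ x, |g x| ≤ B)
    {k : Euc N → F} {k' : Euc N → Euc N →L[ℝ] F} (hk : ∀ z, HasFDerivAt k (k' z) z)
    (hk' : Continuous k') (dk : Decay k) (dk' : Decay k') (ξ₀ : Euc N) :
    HasFDerivAt (fun ξ => ∫ y, g y • k (y + ξ)) (∫ y, g y • k' (y + ξ₀)) ξ₀ := by
  have hkc : Continuous k := continuous_iff_continuousAt.2 fun z => (hk z).continuousAt
  have hB0 : 0 ≤ B := (abs_nonneg _).trans (hB 0)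
  obtain ⟨C, hC0, hC⟩ := dk'.nonneg_const
  have hi := dk.integrable hkc
  refine hasFDerivAt_integral_of_dominated_of_fderiv_le (s := closedBall ξ₀ 1)
    (bound := fun y => B * (C * (2 ^ ((N : ℝ) + 1) * (1 + ‖y + ξ₀‖) ^ (-((N : ℝ) + 1)))))
    (F' := fun ξ y => g y • k' (y + ξ))
    (closedBall_mem_nhds _ one_pos) (Eventually.of_forall fun ξ => ?_) ?_ ?_
    (Eventually.of_forall fun y ξ hξ => ?_) ?_ (Eventually.of_forall fun y ξ hξ => ?_)
  · exact hg.aestronglyMeasurable.smul (by fun_prop : Continuous fun y => k (y + ξ)).aestronglyMeasurable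
  · refine (hi.comp_add_right ξ₀).bdd_smul B hg.aestronglyMeasurable
      (Eventually.of_forall hB)
  · exact hg.aestronglyMeasurable.smul
      (by fun_prop : Continuous fun y => k' (y + ξ₀)).aestronglyMeasurable
  · rw [norm_smul]
    refine mul_le_mul (hB y) ((hC _).trans ?_) (norm_nonneg _) hB0
    exact mul_le_mul_of_nonneg_left (dec_shift y ξ ξ₀ (by simpa [dist_eq_norm] using hξ)) hC0
  · exact (((integrable_dec.comp_add_right ξ₀).const_mul _).const_mul _).const_mul _
  · have := (hk (y + ξ)).comp ξ ((hasFDerivAt_id ξ).const_add y)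
    exact (this.congr_fderiv (by ext; simp)).const_smul (g y)

/-- Convolution of `h` with the kernel `k` at scale `s`. -/
def Q (k : Euc N → F) (h : Euc N → ℝ) (s : ℝ) (x : Euc N) : F := ∫ z, h (x - s • z) • k z

lemma Q_eq_shift (k : Euc N → F) (h : Euc N → ℝ) {s : ℝ} (hs : s ≠ 0) (x : Euc N) :
    Q k h s x = ∫ y, h (-(s • y)) • k (y + s⁻¹ • x) := by
  unfold Q
  rw [← integral_add_right_eq_self _ (s⁻¹ • x)]
  refine integral_congr_ae (Eventually.of_forall fun y => ?_)
  simp only [smul_add, smul_inv_smul₀ hs]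
  congr 2
  abel

lemma Q_hasFDerivAt {h : Euc N → ℝ} (hh : Measurable h) {B : ℝ} (hB : ∀ x, |h x| ≤ B)
    {k : Euc N → F} {k' : Euc N → Euc N →L[ℝ] F} (hk : ∀ z, HasFDerivAt k (k' z) z)
    (hk' : Continuous k') (dk : Decay k) (dk' : Decay k') {s : ℝ} (hs : s ≠ 0) (x : Euc N) :
    HasFDerivAt (Q k h s) (s⁻¹ • Q k' h s x) x := by
  have h1 : Q k h s = fun x => ∫ y, h (-(s • y)) • k (y + s⁻¹ • x) := by
    ext x; exact Q_eq_shift k h hs x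
  rw [h1, Q_eq_shift k' h hs x]
  have h2 := hasFDerivAt_shift (g := fun y => h (-(s • y))) (by fun_prop) (fun y => hB _)
    hk hk' dk dk' (s⁻¹ • x)
  have h3 := h2.comp x ((hasFDerivAt_id x).const_smul s⁻¹)
  refine h3.congr_fderiv ?_
  ext v
  simp

lemma Q_stronglyMeasurable {h : Euc N → ℝ} (hh : Measurable h) {k : Euc N → F}
    (hk : Continuous k) (x : Euc N) : StronglyMeasurable (fun s => Q k h s x) := by
  have : StronglyMeasurable (fun p : ℝ × Euc N => h (x - p.1 • p.2) • k p.2) :=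
    (hh.comp (by fun_prop : Continuous fun p : ℝ × Euc N => x - p.1 • p.2).measurable).stronglyMeasurable.smul
      (hk.comp continuous_snd).stronglyMeasurable
  exact this.integral_prod_right'

lemma Q_integrable {h : Euc N → ℝ} (hh : Measurable h) {B : ℝ} (hB : ∀ x, |h x| ≤ B)
    {k : Euc N → F} (hk : Continuous k) (dk : Decay k) (s : ℝ) (x : Euc N) :
    Integrable (fun z => h (x - s • z) • k z) := by
  refine (dk.integrable hk).bdd_smul B ?_ (Eventually.of_forall fun z => hB _)
  exact (hh.comp (by fun_prop : Continuous fun z : Euc N => x - s • z).measurable).aestronglyMeasurable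

lemma Q_bound {h : Euc N → ℝ} {B : ℝ} (hB : ∀ x, |h x| ≤ B)
    {k : Euc N → F} (hk : Continuous k) (dk : Decay k) (s : ℝ) (x : Euc N) :
    ‖Q k h s x‖ ≤ B * ∫ z, ‖k z‖ := by
  unfold Q
  rw [← integral_const_mul]
  refine norm_integral_le_of_norm_le ((dk.integrable hk).norm.const_mul B)
    (Eventually.of_forall fun z => ?_)
  rw [norm_smul]
  exact mul_le_mul_of_nonneg_right (hB _) (norm_nonneg _)

lemma Q_continuous {h : Euc N → ℝ} (hh : Continuous h) {B : ℝ} (hB : ∀ x, |h x| ≤ B)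
    {k : Euc N → F} (hk : Continuous k) (dk : Decay k) :
    Continuous (fun p : ℝ × Euc N => Q k h p.1 p.2) := by
  unfold Q
  refine continuous_of_dominated (bound := fun z => B * ‖k z‖) (fun p => ?_)
    (fun p => Eventually.of_forall fun z => ?_) ((dk.integrable hk).norm.const_mul B)
    (Eventually.of_forall fun z => ?_)
  · exact (by fun_prop : Continuous fun z => h (p.2 - p.1 • z) • k z).aestronglyMeasurable
  · rw [norm_smul]
    exact mul_le_mul_of_nonneg_right (hB _) (norm_nonneg _)
  · fun_prop

/-- The outer superposition over scales. -/
lemma outer_hasFDerivAt {h : Euc N → ℝ} (hh : Measurable h) {B : ℝ} (hB : ∀ x, |h x| ≤ B)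
    {k : Euc N → F} {k' : Euc N → Euc N →L[ℝ] F} (hk : ∀ z, HasFDerivAt k (k' z) z)
    (hk' : Continuous k') (dk : Decay k) (dk' : Decay k')
    {a : ℝ → ℝ} (ha : Measurable a) (hai : IntegrableOn a (Ioi 0))
    {b : ℝ → ℝ} (hb : ∀ s, 0 < s → ∀ x, ‖Q k' h s x‖ ≤ b s)
    (hbi : IntegrableOn (fun s => |a s * s⁻¹| * b s) (Ioi 0)) (x : Euc N) :
    HasFDerivAt (fun x => ∫ s in Ioi (0 : ℝ), a s • Q k h s x)
      (∫ s in Ioi (0 : ℝ), (a s * s⁻¹) • Q k' h s x) x := by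
  have hkc : Continuous k := continuous_iff_continuousAt.2 fun z => (hk z).continuousAt
  refine hasFDerivAt_integral_of_dominated_of_fderiv_le (s := univ)
    (bound := fun s => |a s * s⁻¹| * b s)
    (F' := fun x s => (a s * s⁻¹) • Q k' h s x) univ_mem
    (Eventually.of_forall fun x => ?_) ?_ ?_ ?_ hbi ?_
  · exact (ha.stronglyMeasurable.smul (Q_stronglyMeasurable hh hkc x)).aestronglyMeasurable
  · refine Integrable.smul_bdd hai (B * ∫ z, ‖k z‖)
      (Q_stronglyMeasurable hh hkc x).aestronglyMeasurable
      (Eventually.of_forall fun s => Q_bound hB hkc dk s x)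
  · exact ((ha.mul measurable_inv).stronglyMeasurable.smul
      (Q_stronglyMeasurable hh hk' x)).aestronglyMeasurable
  · refine (ae_restrict_mem measurableSet_Ioi).mono fun s hs x _ => ?_
    rw [norm_smul]
    exact mul_le_mul_of_nonneg_left (hb s hs x) (norm_nonneg _)
  · refine (ae_restrict_mem measurableSet_Ioi).mono fun s hs x _ => ?_
    rw [mul_smul]
    exact (Q_hasFDerivAt hh hB hk hk' dk dk' (ne_of_gt hs) x).const_smul (a s)

end kernels

section gauss
variable {N : ℕ}


lemma exp_poly_bound {b : ℝ} (hb : 0 < b) (n : ℕ) :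
    ∃ C : ℝ, 0 ≤ C ∧ ∀ t : ℝ, 0 ≤ t → (1 + t) ^ n * Real.exp (-b * t ^ 2) ≤ C := by
  refine ⟨n.factorial / (2 * b) ^ n * Real.exp (3 * b), by positivity, fun t ht => ?_⟩
  have h1 := Real.pow_div_factorial_le_exp (2 * b * (1 + t)) (by positivity) n
  rw [div_le_iff₀ (by positivity), mul_pow] at h1
  have h2 : (1 + t) ^ n ≤ n.factorial / (2 * b) ^ n * Real.exp (2 * b * (1 + t)) := by
    rw [div_mul_eq_mul_div, le_div_iff₀ (by positivity)]
    linarith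
  calc (1 + t) ^ n * Real.exp (-b * t ^ 2)
      ≤ (n.factorial / (2 * b) ^ n * Real.exp (2 * b * (1 + t))) * Real.exp (-b * t ^ 2) := by
        gcongr
    _ = n.factorial / (2 * b) ^ n * Real.exp (2 * b * (1 + t) + -b * t ^ 2) := by
        rw [mul_assoc, Real.exp_add]
    _ ≤ _ := by
        gcongr
        nlinarith [mul_nonneg hb.le (sq_nonneg (t - 1))]

lemma gauss_decay {b : ℝ} (hb : 0 < b) (m : ℕ) : ∃ C : ℝ, 0 ≤ C ∧ ∀ z : Euc N,
    (1 + ‖z‖) ^ m * Real.exp (-b * ‖z‖ ^ 2) ≤ C * (1 + ‖z‖) ^ (-((N : ℝ) + 1)) := by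
  obtain ⟨C, hC0, hC⟩ := exp_poly_bound hb (N + 1 + m)
  refine ⟨C, hC0, fun z => ?_⟩
  have p : 0 < 1 + ‖z‖ := by positivity
  have h := hC ‖z‖ (norm_nonneg _)
  rw [Real.rpow_neg p.le, ← div_eq_mul_inv, le_div_iff₀ (by positivity)]
  have : (1 + ‖z‖) ^ ((N : ℝ) + 1) = (1 + ‖z‖) ^ (N + 1) := by
    rw [← Real.rpow_natCast]; push_cast; rfl
  rw [this]
  calc _ = (1 + ‖z‖) ^ (N + 1 + m) * Real.exp (-b * ‖z‖ ^ 2) := by rw [pow_add]; ring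
    _ ≤ C := h

variable (N) in
/-- Normalisation constant. -/
def Zc : ℝ := ∫ z : Euc N, Real.exp (-(1 / 2) * ‖z‖ ^ 2)

lemma Zc_pos : 0 < Zc N := by
  unfold Zc
  rw [GaussianFourier.integral_rexp_neg_mul_sq_norm (by norm_num)]
  positivity

/-- Standard Gaussian density. -/
def gam (z : Euc N) : ℝ := (Zc N)⁻¹ * Real.exp (-(1 / 2) * ‖z‖ ^ 2)

variable (N) in
/-- The inner product as a continuous bilinear map. -/
def iB : Euc N →L[ℝ] Euc N →L[ℝ] ℝ := innerSL ℝ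

lemma iB_apply (z v : Euc N) : iB N z v = inner ℝ z v := rfl

lemma norm_iB (z : Euc N) : ‖iB N z‖ = ‖z‖ := innerSL_apply_norm ℝ z

def gam1 (z : Euc N) : Euc N →L[ℝ] ℝ := (-(gam z)) • iB N z

def gam2 (z : Euc N) : Euc N →L[ℝ] Euc N →L[ℝ] ℝ :=
  (-(gam z)) • iB N + (gam z • iB N z).smulRight (iB N z)

def gamL (z : Euc N) : ℝ := gam z * (‖z‖ ^ 2 - N)

lemma gam_pos (z : Euc N) : 0 < gam z := mul_pos (inv_pos.2 Zc_pos) (Real.exp_pos _)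

lemma gam_cont : Continuous (gam (N := N)) := by unfold gam; fun_prop
lemma gam1_cont : Continuous (gam1 (N := N)) := by
  have := gam_cont (N := N)
  unfold gam1; fun_prop
lemma gam2_cont : Continuous (gam2 (N := N)) := by
  have := gam_cont (N := N)
  unfold gam2
  have h1 : Continuous fun z : Euc N => (-(gam z)) • iB N := by fun_prop
  have h : Continuous fun z : Euc N =>
    ContinuousLinearMap.smulRightL ℝ (Euc N) (Euc N →L[ℝ] ℝ) (gam z • iB N z) (iB N z) := by
    fun_prop
  exact h1.add h
lemma gamL_cont : Continuous (gamL (N := N)) := by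
  have := gam_cont (N := N)
  unfold gamL; fun_prop

lemma gam_hasFDerivAt (z : Euc N) : HasFDerivAt gam (gam1 z) z := by
  have h := (((hasStrictFDerivAt_norm_sq z).hasFDerivAt.const_mul (-(1 / 2) : ℝ)).exp.const_mul
    (Zc N)⁻¹)
  refine h.congr_fderiv ?_
  ext v
  simp [gam1, gam, iB_apply]
  ring

lemma gam1_hasFDerivAt (z : Euc N) : HasFDerivAt gam1 (gam2 z) z := by
  have h := (gam_hasFDerivAt z).neg.smul (iB N).hasFDerivAt (x := z)
  refine h.congr_fderiv ?_
  ext v w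
  simp [gam2, gam1]

lemma gam_decay_aux (m : ℕ) : ∃ C : ℝ, 0 ≤ C ∧ ∀ z : Euc N,
    (1 + ‖z‖) ^ m * gam z ≤ C * (1 + ‖z‖) ^ (-((N : ℝ) + 1)) := by
  obtain ⟨C, hC0, hC⟩ := gauss_decay (N := N) (b := 1 / 2) (by norm_num) m
  refine ⟨(Zc N)⁻¹ * C, mul_nonneg (inv_pos.2 Zc_pos).le hC0, fun z => ?_⟩
  have := mul_le_mul_of_nonneg_left (hC z) (inv_pos.2 (Zc_pos (N := N))).le
  unfold gam
  linarith

lemma decay_of_le {F : Type*} [NormedAddCommGroup F] {k : Euc N → F} (D : ℝ) {m : ℕ}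
    (hk : ∀ z, ‖k z‖ ≤ D * ((1 + ‖z‖) ^ m * gam z)) (hD : 0 ≤ D) : Decay k := by
  obtain ⟨C, hC0, hC⟩ := gam_decay_aux (N := N) m
  refine ⟨D * C, fun z => (hk z).trans ?_⟩
  rw [mul_assoc]
  exact mul_le_mul_of_nonneg_left (hC z) hD

lemma gam_decay : Decay (gam (N := N)) := by
  refine decay_of_le 1 (m := 2) (fun z => ?_) zero_le_one
  rw [Real.norm_of_nonneg (gam_pos z).le]
  nlinarith [norm_nonneg z, gam_pos z, mul_nonneg (norm_nonneg z) (gam_pos z).le,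
    mul_nonneg (sq_nonneg ‖z‖) (gam_pos z).le]

lemma gam1_decay : Decay (gam1 (N := N)) := by
  refine decay_of_le 1 (m := 2) (fun z => ?_) zero_le_one
  rw [gam1, norm_smul, norm_neg, Real.norm_of_nonneg (gam_pos z).le, norm_iB]
  nlinarith [norm_nonneg z, gam_pos z, mul_nonneg (norm_nonneg z) (gam_pos z).le,
    mul_nonneg (sq_nonneg ‖z‖) (gam_pos z).le]

lemma gam2_le (z : Euc N) : ‖gam2 z‖ ≤ (‖iB N‖ + 1) * ((1 + ‖z‖) ^ 2 * gam z) := by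
  have h1 : ‖gam2 z‖ ≤ gam z * ‖iB N‖ + gam z * ‖z‖ * ‖z‖ := by
    unfold gam2
    refine (norm_add_le ((-(gam z)) • iB N) ((gam z • iB N z).smulRight (iB N z))).trans
      (add_le_add ?_ ?_)
    · rw [norm_smul, norm_neg, Real.norm_of_nonneg (gam_pos z).le]
    · rw [ContinuousLinearMap.norm_smulRight_apply, norm_smul, norm_iB,
        Real.norm_of_nonneg (gam_pos z).le]
  refine h1.trans ?_
  have := norm_nonneg z
  have := (gam_pos z).le
  have := norm_nonneg (iB N)
  have e : (‖iB N‖ + 1) * ((1 + ‖z‖) ^ 2 * gam z) - (gam z * ‖iB N‖ + gam z * ‖z‖ * ‖z‖)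
    = gam z * (‖iB N‖ * (2 * ‖z‖ + ‖z‖ ^ 2) + (1 + 2 * ‖z‖)) := by ring
  have : 0 ≤ gam z * (‖iB N‖ * (2 * ‖z‖ + ‖z‖ ^ 2) + (1 + 2 * ‖z‖)) := by positivity
  linarith

lemma gam2_decay : Decay (gam2 (N := N)) :=
  decay_of_le (‖iB N‖ + 1) gam2_le (by positivity)

lemma gam2_mom : Integrable (fun z : Euc N => (1 + ‖z‖) * ‖gam2 z‖) := by
  have hd : Decay (fun z : Euc N => (1 + ‖z‖) * ‖gam2 z‖) := by
    refine decay_of_le (‖iB N‖ + 1) (m := 3) (fun z => ?_) (by positivity)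
    rw [Real.norm_of_nonneg (by positivity)]
    calc (1 + ‖z‖) * ‖gam2 z‖ ≤ (1 + ‖z‖) * ((‖iB N‖ + 1) * ((1 + ‖z‖) ^ 2 * gam z)) :=
          mul_le_mul_of_nonneg_left (gam2_le z) (by positivity)
      _ = _ := by ring
  exact hd.integrable ((by fun_prop : Continuous fun z : Euc N => 1 + ‖z‖).mul gam2_cont.norm)

lemma gamL_decay : Decay (gamL (N := N)) := by
  refine decay_of_le ((N : ℝ) + 1) (m := 2) (fun z => ?_) (by positivity)
  have h1 : ‖gamL z‖ ≤ gam z * (‖z‖ ^ 2 + N) := by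
    rw [gamL, norm_mul, Real.norm_of_nonneg (gam_pos z).le]
    refine mul_le_mul_of_nonneg_left ?_ (gam_pos z).le
    refine (norm_sub_le _ _).trans ?_
    simp
  refine h1.trans ?_
  have := norm_nonneg z
  have := (gam_pos z).le
  have e : ((N : ℝ) + 1) * ((1 + ‖z‖) ^ 2 * gam z) - gam z * (‖z‖ ^ 2 + N)
    = gam z * (N * (2 * ‖z‖ + ‖z‖ ^ 2) + (1 + 2 * ‖z‖)) := by ring
  have : 0 ≤ gam z * ((N : ℝ) * (2 * ‖z‖ + ‖z‖ ^ 2) + (1 + 2 * ‖z‖)) := by positivity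
  linarith

lemma gam_integral : ∫ z : Euc N, gam z = 1 := by
  unfold gam
  rw [integral_const_mul]
  exact inv_mul_cancel₀ Zc_pos.ne'

lemma gam2_trace (z : Euc N) : ∑ i : Fin N,
    gam2 z (EuclideanSpace.single i 1) (EuclideanSpace.single i 1) = gamL z := by
  have h : ∀ i : Fin N, gam2 z (EuclideanSpace.single i 1) (EuclideanSpace.single i 1)
      = gam z * (z i ^ 2) - gam z := by
    intro i
    have e : iB N z (EuclideanSpace.single i 1) = z i := by
      rw [iB_apply, EuclideanSpace.inner_single_right]; simp
    have e2 : iB N (EuclideanSpace.single i 1) (EuclideanSpace.single i 1) = 1 := by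
      rw [iB_apply, EuclideanSpace.inner_single_right]; simp
    simp [gam2, e, e2]
    ring
  simp_rw [h]
  rw [Finset.sum_sub_distrib, ← Finset.mul_sum, gamL, EuclideanSpace.norm_sq_eq]
  simp
  ring

lemma gam2_integral : ∫ z : Euc N, gam2 z = 0 := by
  have h := Q_hasFDerivAt (N := N) (F := Euc N →L[ℝ] ℝ) (k := gam1) (k' := gam2) (h := fun _ => 1) measurable_const (B := 1) (by simp)
    gam1_hasFDerivAt gam2_cont gam1_decay gam2_decay (s := 1) one_ne_zero 0
  have h2 : HasFDerivAt (𝕜 := ℝ) (Q (N := N) gam1 (fun _ => 1) 1) 0 0 := by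
    have : Q (N := N) gam1 (fun _ => 1) 1 = fun _ => ∫ z, gam1 z := by
      ext x; simp [Q]
    rw [this]
    exact hasFDerivAt_const _ _
  have := h.unique h2
  simpa [Q] using this

lemma radial_q {g : Euc N → ℝ} (hg : Measurable g) {B : ℝ} (hB : ∀ x, |g x| ≤ B) {r : ℝ}
    (hr : 0 < r) : Integrable (fun y => g y * Real.exp (-r * ‖y‖ ^ 2)) ∧
    Integrable (fun y => g y * (-‖y‖ ^ 2 * Real.exp (-r * ‖y‖ ^ 2))) ∧
    HasDerivAt (fun r => ∫ y, g y * Real.exp (-r * ‖y‖ ^ 2))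
      (∫ y, g y * (-‖y‖ ^ 2 * Real.exp (-r * ‖y‖ ^ 2))) r := by
  obtain ⟨C, hC0, hC⟩ := gauss_decay (N := N) (b := r / 2) (by positivity) 2
  have hB0 : 0 ≤ B := (abs_nonneg _).trans (hB 0)
  have hdom : ∀ y : Euc N, ∀ ρ ∈ Ioi (r / 2), ∀ c : ℝ, |c| ≤ (1 + ‖y‖) ^ 2 →
      ‖g y * (c * Real.exp (-ρ * ‖y‖ ^ 2))‖ ≤ B * (C * (1 + ‖y‖) ^ (-((N : ℝ) + 1))) := by
    intro y ρ hρ c hc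
    rw [norm_mul]
    refine mul_le_mul (hB y) (le_trans ?_ (hC y)) (norm_nonneg _) hB0
    rw [norm_mul, Real.norm_of_nonneg (Real.exp_pos _).le]
    refine mul_le_mul hc ?_ (Real.exp_pos _).le (by positivity)
    refine Real.exp_le_exp.2 ?_
    have : r / 2 < ρ := hρ
    nlinarith [sq_nonneg ‖y‖]
  have hbi : Integrable (fun y : Euc N => B * (C * (1 + ‖y‖) ^ (-((N : ℝ) + 1)))) :=
    (integrable_dec.const_mul _).const_mul _
  have hc2 : ∀ y : Euc N, |(-‖y‖ ^ 2)| ≤ (1 + ‖y‖) ^ 2 := fun y => by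
    rw [abs_neg, abs_of_nonneg (by positivity)]
    nlinarith [norm_nonneg y]
  have hi0 : Integrable (fun y => g y * Real.exp (-r * ‖y‖ ^ 2)) := by
    refine hbi.mono' (hg.mul (by fun_prop)).aestronglyMeasurable (Eventually.of_forall fun y => ?_)
    have := hdom y r (by simp; linarith) 1 (by
      rw [abs_one]; nlinarith [norm_nonneg y])
    rwa [one_mul] at this
  refine ⟨hi0, hasDerivAt_integral_of_dominated_loc_of_deriv_le (s := Ioi (r / 2))
    (F' := fun r y => g y * (-‖y‖ ^ 2 * Real.exp (-r * ‖y‖ ^ 2)))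
    (bound := fun y => B * (C * (1 + ‖y‖) ^ (-((N : ℝ) + 1)))) (Ioi_mem_nhds (by linarith))
    (Eventually.of_forall fun ρ => ?_) hi0 ?_ (Eventually.of_forall fun y ρ hρ => ?_) hbi
    (Eventually.of_forall fun y ρ hρ => ?_)⟩
  · exact (hg.mul (by fun_prop)).aestronglyMeasurable
  · exact (hg.mul (by fun_prop)).aestronglyMeasurable
  · exact hdom y ρ hρ _ (hc2 y)
  · have h1 : HasDerivAt (fun ρ : ℝ => -ρ * ‖y‖ ^ 2) (-1 * ‖y‖ ^ 2) ρ :=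
      ((hasDerivAt_id ρ).neg).mul_const _
    have := (h1.exp).const_mul (g y)
    refine this.congr_deriv ?_
    ring

lemma Q_gam_eq (h : Euc N → ℝ) (x : Euc N) {s : ℝ} (hs : 0 < s) :
    Q gam h s x = (Zc N)⁻¹ * (s ^ N)⁻¹ *
      ∫ y, h (x - y) * Real.exp (-((1 / 2) * (s ^ 2)⁻¹) * ‖y‖ ^ 2) := by
  have h1 := Measure.integral_comp_smul (volume : Measure (Euc N))
    (fun y => h (x - y) * gam (s⁻¹ • y)) s
  simp only [inv_smul_smul₀ hs.ne', finrank_euclideanSpace, Fintype.card_fin] at h1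
  unfold Q
  simp only [smul_eq_mul] at h1 ⊢
  rw [h1, abs_of_pos (by positivity), mul_comm (Zc N)⁻¹, mul_assoc, ← integral_const_mul (Zc N)⁻¹]
  congr 1
  refine integral_congr_ae (Eventually.of_forall fun y => ?_)
  simp only [gam, norm_smul, norm_inv, Real.norm_of_nonneg hs.le]
  rw [mul_left_comm]
  congr 3
  field_simp

lemma Q_gamL_eq (h : Euc N → ℝ) (x : Euc N) {s : ℝ} (hs : 0 < s) :
    Q gamL h s x = (Zc N)⁻¹ * (s ^ N)⁻¹ *
      ∫ y, h (x - y) * ((‖y‖ ^ 2 / s ^ 2 - N) * Real.exp (-((1 / 2) * (s ^ 2)⁻¹) * ‖y‖ ^ 2)) := by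
  have h1 := Measure.integral_comp_smul (volume : Measure (Euc N))
    (fun y => h (x - y) * gamL (s⁻¹ • y)) s
  simp only [inv_smul_smul₀ hs.ne', finrank_euclideanSpace, Fintype.card_fin] at h1
  unfold Q
  simp only [smul_eq_mul] at h1 ⊢
  rw [h1, abs_of_pos (by positivity), mul_comm (Zc N)⁻¹, mul_assoc, ← integral_const_mul (Zc N)⁻¹]
  congr 1
  refine integral_congr_ae (Eventually.of_forall fun y => ?_)
  simp only [gamL, gam, norm_smul, norm_inv, Real.norm_of_nonneg hs.le]
  have : -(1 / 2) * (s⁻¹ * ‖y‖) ^ 2 = -(1 / 2 * (s ^ 2)⁻¹) * ‖y‖ ^ 2 := by field_simp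
  rw [this]
  field_simp

lemma Q_gam_deriv {h : Euc N → ℝ} (hh : Measurable h) {B : ℝ} (hB : ∀ x, |h x| ≤ B)
    (x : Euc N) {s : ℝ} (hs : 0 < s) :
    HasDerivAt (fun s => Q gam h s x) (s⁻¹ * Q gamL h s x) s := by
  have hg : Measurable (fun y => h (x - y)) := by fun_prop
  set r : ℝ → ℝ := fun s => (1 / 2) * (s ^ 2)⁻¹ with hrdef
  have hr : HasDerivAt r ((1 / 2) * (-(2 * s) / (s ^ 2) ^ 2)) s := by
    have := ((hasDerivAt_pow 2 s).inv (by positivity)).const_mul (1 / 2 : ℝ)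
    exact this.congr_deriv (by simp)
  obtain ⟨hi0, hi2, hq0⟩ := radial_q hg (fun y => hB _) (r := r s) (by positivity)
  have hq := hq0.comp s hr
  have hp := ((hasDerivAt_pow N s).inv (by positivity)).const_mul (Zc N)⁻¹
  have hpq := hp.mul hq
  have hev : (fun s => Q gam h s x) =ᶠ[𝓝 s] (fun y => (Zc N)⁻¹ * (fun x => x ^ N)⁻¹ y) *
      ((fun r => ∫ y, h (x - y) * Real.exp (-r * ‖y‖ ^ 2)) ∘ r) := by
    filter_upwards [Ioi_mem_nhds hs] with t ht
    rw [Q_gam_eq h x ht]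
    rfl
  refine (hpq.congr_of_eventuallyEq hev).congr_deriv ?_
  rw [Q_gamL_eq h x hs]
  have hsplit : ∫ y, h (x - y) * ((‖y‖ ^ 2 / s ^ 2 - N) * Real.exp (-(r s) * ‖y‖ ^ 2))
      = -(s ^ 2)⁻¹ * (∫ y, h (x - y) * (-‖y‖ ^ 2 * Real.exp (-(r s) * ‖y‖ ^ 2)))
        - N * ∫ y, h (x - y) * Real.exp (-(r s) * ‖y‖ ^ 2) := by
    rw [← integral_const_mul, ← integral_const_mul, ← integral_sub (hi2.const_mul _) (hi0.const_mul _)]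
    refine integral_congr_ae (Eventually.of_forall fun y => ?_)
    field_simp
    try ring
  change _ = s⁻¹ * (_ * ∫ y, h (x - y) * ((‖y‖ ^ 2 / s ^ 2 - N) * Real.exp (-(r s) * ‖y‖ ^ 2)))
  rw [hsplit]
  simp only [Function.comp, Pi.inv_apply]
  clear hsplit hev hpq hp hq hq0
  generalize (∫ y, h (x - y) * (-‖y‖ ^ 2 * Real.exp (-(r s) * ‖y‖ ^ 2))) = I2
  generalize (∫ y, h (x - y) * Real.exp (-(r s) * ‖y‖ ^ 2)) = I0
  rcases Nat.eq_zero_or_pos N with h0 | h0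
  · have : (N : ℝ) = 0 := by exact_mod_cast h0
    rw [this]; subst h0; field_simp; ring
  · obtain ⟨m, rfl⟩ : ∃ m, N = m + 1 := ⟨N - 1, by omega⟩
    simp only [Nat.add_sub_cancel, pow_succ]
    field_simp
    ring

end gauss

section resolvent
variable {N : ℕ}

def th (K s : ℝ) : ℝ := Real.exp (-(K / 2) * s ^ 2)

lemma th_pos (K s : ℝ) : 0 < th K s := Real.exp_pos _
lemma th_cont (K : ℝ) : Continuous (th K) := by unfold th; fun_prop

lemma th_rpow_int {K : ℝ} (hK : 0 < K) {p : ℝ} (hp : -1 < p) :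
    IntegrableOn (fun s => s ^ p * th K s) (Ioi 0) :=
  integrableOn_rpow_mul_exp_neg_mul_sq (by positivity) hp

lemma th_int {K : ℝ} (hK : 0 < K) : IntegrableOn (th K) (Ioi 0) := by
  simpa using th_rpow_int hK (p := 0) (by norm_num)

lemma sth_int {K : ℝ} (hK : 0 < K) : IntegrableOn (fun s => s * th K s) (Ioi 0) := by
  simpa using th_rpow_int hK (p := 1) (by norm_num)

/-- The resolvent `(K - Δ)⁻¹ h`. -/
def W (K : ℝ) (h : Euc N → ℝ) (x : Euc N) : ℝ := ∫ s in Ioi (0 : ℝ), (s * th K s) • Q gam h s x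

def W1 (K : ℝ) (h : Euc N → ℝ) (x : Euc N) : Euc N →L[ℝ] ℝ :=
  ∫ s in Ioi (0 : ℝ), th K s • Q gam1 h s x

def W2 (K : ℝ) (h : Euc N → ℝ) (x : Euc N) : Euc N →L[ℝ] Euc N →L[ℝ] ℝ :=
  ∫ s in Ioi (0 : ℝ), (th K s * s⁻¹) • Q gam2 h s x

variable {K : ℝ} {h : Euc N → ℝ} {B : ℝ}

lemma W_hasFDerivAt (hK : 0 < K) (hh : Measurable h) (hB : ∀ x, |h x| ≤ B) (x : Euc N) :
    HasFDerivAt (W K h) (W1 K h x) x := by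
  have e : W1 K h x = ∫ s in Ioi (0 : ℝ), ((s * th K s) * s⁻¹) • Q gam1 h s x := by
    refine setIntegral_congr_fun measurableSet_Ioi fun s hs => ?_
    have : s ≠ 0 := ne_of_gt hs
    beta_reduce
    congr 1
    field_simp
  rw [e]
  refine outer_hasFDerivAt hh hB gam_hasFDerivAt gam1_cont gam_decay gam1_decay
    (by have := (th_cont K).measurable; fun_prop) (sth_int hK)
    (b := fun _ => B * ∫ z : Euc N, ‖gam1 z‖)
    (fun s _ x => Q_bound hB gam1_cont gam1_decay s x) ?_ x
  have hi : IntegrableOn (fun s => th K s * (B * ∫ z : Euc N, ‖gam1 z‖)) (Ioi 0) :=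
    (th_int hK).mul_const _
  refine IntegrableOn.congr_fun hi (fun s hs => ?_) measurableSet_Ioi
  have hs' : s ≠ 0 := ne_of_gt hs
  have : s * th K s * s⁻¹ = th K s := by field_simp
  simp only [this, abs_of_pos (th_pos K s)]

lemma W1_bound (hK : 0 < K) (hB : ∀ x, |h x| ≤ B) (x : Euc N) :
    ‖W1 K h x‖ ≤ ∫ s in Ioi (0 : ℝ), th K s * (B * ∫ z : Euc N, ‖gam1 z‖) := by
  refine norm_integral_le_of_norm_le ((th_int hK).mul_const _) (Eventually.of_forall fun s => ?_)
  rw [norm_smul, Real.norm_of_nonneg (th_pos K s).le]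
  exact mul_le_mul_of_nonneg_left (Q_bound hB gam1_cont gam1_decay s x) (th_pos K s).le

lemma W_lip (hK : 0 < K) (hh : Measurable h) (hB : ∀ x, |h x| ≤ B) :
    ∃ L : ℝ, 0 ≤ L ∧ ∀ x y, |W K h x - W K h y| ≤ L * ‖x - y‖ := by
  refine ⟨_, (norm_nonneg _).trans (W1_bound hK hB 0), fun x y => ?_⟩
  exact convex_univ.norm_image_sub_le_of_norm_hasFDerivWithin_le
    (fun z _ => (W_hasFDerivAt hK hh hB z).hasFDerivWithinAt) (fun z _ => W1_bound hK hB z)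
    (mem_univ y) (mem_univ x)

/-- Hölder continuity with a real exponent. -/
def Hol (β : ℝ) (h : Euc N → ℝ) : Prop :=
  ∃ C : ℝ, 0 ≤ C ∧ ∀ x y, |h x - h y| ≤ C * ‖x - y‖ ^ β

lemma Hol.continuous {β : ℝ} (hβ : 0 < β) (hh : Hol β h) : Continuous h := by
  obtain ⟨C, hC0, hC⟩ := hh
  rw [continuous_iff_continuousAt]
  intro x
  rw [ContinuousAt, tendsto_iff_norm_sub_tendsto_zero]
  refine squeeze_zero (fun _ => norm_nonneg _) (fun y => hC y x) ?_
  have : Continuous fun y : Euc N => C * ‖y - x‖ ^ β :=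
    continuous_const.mul ((continuous_id.sub continuous_const).norm.rpow_const
      fun _ => Or.inr hβ.le)
  have h2 := this.tendsto x
  simpa [Real.zero_rpow hβ.ne'] using h2

lemma Q2_bound {β : ℝ} (hβ : 0 < β) (hβ1 : β ≤ 1) (hh : Hol β h) (hB : ∀ x, |h x| ≤ B) :
    ∃ D : ℝ, 0 ≤ D ∧ ∀ s, 0 < s → ∀ x, ‖Q gam2 h s x‖ ≤ D * s ^ β := by
  have hcont := hh.continuous hβ
  obtain ⟨C, hC0, hC⟩ := hh
  have hM : 0 ≤ ∫ z : Euc N, (1 + ‖z‖) * ‖gam2 z‖ := integral_nonneg fun z => by positivity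
  refine ⟨C * ∫ z : Euc N, (1 + ‖z‖) * ‖gam2 z‖, by positivity, fun s hs x => ?_⟩
  have e : Q gam2 h s x = ∫ z, (h (x - s • z) - h x) • gam2 z := by
    simp only [sub_smul]
    have hi2 : Integrable (fun z : Euc N => h x • gam2 z) :=
      (gam2_decay.integrable gam2_cont).smul (h x)
    rw [integral_sub (Q_integrable hcont.measurable hB gam2_cont gam2_decay s x)
      hi2, integral_smul, gam2_integral]
    simp [Q]
  rw [e]
  have e2 : C * (∫ z : Euc N, (1 + ‖z‖) * ‖gam2 z‖) * s ^ β
      = ∫ z : Euc N, (C * s ^ β) * ((1 + ‖z‖) * ‖gam2 z‖) := by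
    rw [integral_const_mul]; ring
  rw [e2]
  refine norm_integral_le_of_norm_le (gam2_mom.const_mul _) (Eventually.of_forall fun z => ?_)
  rw [norm_smul, ← mul_assoc]
  refine mul_le_mul_of_nonneg_right ((hC _ _).trans ?_) (norm_nonneg _)
  have e3 : ‖x - s • z - x‖ = s * ‖z‖ := by
    rw [sub_sub_cancel_left, norm_neg, norm_smul, Real.norm_of_nonneg hs.le]
  rw [e3, Real.mul_rpow hs.le (norm_nonneg _), mul_assoc]
  gcongr
  calc ‖z‖ ^ β ≤ (1 + ‖z‖) ^ β :=
        Real.rpow_le_rpow (norm_nonneg _) (by linarith) hβ.le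
    _ ≤ (1 + ‖z‖) ^ (1 : ℝ) :=
        Real.rpow_le_rpow_of_exponent_le (by linarith [norm_nonneg z]) hβ1
    _ = 1 + ‖z‖ := Real.rpow_one _

lemma th_dom_int (hK : 0 < K) {β : ℝ} (hβ : 0 < β) (D : ℝ) :
    IntegrableOn (fun s => |th K s * s⁻¹| * (D * s ^ β)) (Ioi 0) := by
  have := (th_rpow_int hK (p := β - 1) (by linarith)).const_mul D
  refine IntegrableOn.congr_fun this (fun s hs => ?_) measurableSet_Ioi
  have hs' : 0 < s := hs
  rw [abs_of_pos (mul_pos (th_pos K s) (inv_pos.2 hs')), Real.rpow_sub_one hs'.ne']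
  field_simp

lemma W1_hasFDerivAt (hK : 0 < K) {β : ℝ} (hβ : 0 < β) (hβ1 : β ≤ 1) (hh : Hol β h)
    (hB : ∀ x, |h x| ≤ B) (x : Euc N) : HasFDerivAt (W1 K h) (W2 K h x) x := by
  obtain ⟨D, hD0, hD⟩ := Q2_bound hβ hβ1 hh hB
  exact outer_hasFDerivAt (hh.continuous hβ).measurable hB gam1_hasFDerivAt gam2_cont gam1_decay
    gam2_decay (th_cont K).measurable (th_int hK) (b := fun s => D * s ^ β) hD
    (th_dom_int hK hβ D) x

lemma W2_int (hK : 0 < K) {β : ℝ} (hβ : 0 < β) (hβ1 : β ≤ 1) (hh : Hol β h)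
    (hB : ∀ x, |h x| ≤ B) (x : Euc N) :
    IntegrableOn (fun s => (th K s * s⁻¹) • Q gam2 h s x) (Ioi 0) := by
  obtain ⟨D, hD0, hD⟩ := Q2_bound hβ hβ1 hh hB
  refine Integrable.mono' (th_dom_int hK hβ D) ?_ ?_
  · exact (((th_cont K).measurable.mul measurable_inv).stronglyMeasurable.smul
      (Q_stronglyMeasurable (hh.continuous hβ).measurable gam2_cont x)).aestronglyMeasurable
  · refine (ae_restrict_mem measurableSet_Ioi).mono fun s hs => ?_
    rw [norm_smul]
    exact mul_le_mul_of_nonneg_left (hD s hs x) (norm_nonneg _)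

lemma W2_continuous (hK : 0 < K) {β : ℝ} (hβ : 0 < β) (hβ1 : β ≤ 1) (hh : Hol β h)
    (hB : ∀ x, |h x| ≤ B) : Continuous (W2 K h) := by
  obtain ⟨D, hD0, hD⟩ := Q2_bound hβ hβ1 hh hB
  refine continuous_of_dominated (fun x => (W2_int hK hβ hβ1 hh hB x).aestronglyMeasurable)
    (fun x => ?_) (th_dom_int hK hβ D) (Eventually.of_forall fun s => ?_)
  · refine (ae_restrict_mem measurableSet_Ioi).mono fun s hs => ?_
    rw [norm_smul]
    exact mul_le_mul_of_nonneg_left (hD s hs x) (norm_nonneg _)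
  · exact ((Q_continuous (hh.continuous hβ) hB gam2_cont gam2_decay).comp
      (by fun_prop : Continuous fun x : Euc N => (s, x))).const_smul (th K s * s⁻¹)

lemma W_contDiff (hK : 0 < K) {β : ℝ} (hβ : 0 < β) (hβ1 : β ≤ 1) (hh : Hol β h)
    (hB : ∀ x, |h x| ≤ B) : ContDiff ℝ 2 (W K h) := by
  have h1 : ContDiff ℝ 1 (W1 K h) := contDiff_one_iff_hasFDerivAt.2
    ⟨W2 K h, W2_continuous hK hβ hβ1 hh hB, W1_hasFDerivAt hK hβ hβ1 hh hB⟩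
  have := (contDiff_succ_iff_hasFDerivAt (𝕜 := ℝ) (f := W K h) (n := 1)).2
    ⟨W1 K h, h1, W_hasFDerivAt hK (hh.continuous hβ).measurable hB⟩
  exact this

variable (N) in
/-- The trace of a bilinear form. -/
def Tr : (Euc N →L[ℝ] Euc N →L[ℝ] ℝ) →L[ℝ] ℝ :=
  ∑ i : Fin N, (ContinuousLinearMap.apply ℝ ℝ (EuclideanSpace.single i (1 : ℝ))).comp
    (ContinuousLinearMap.apply ℝ (Euc N →L[ℝ] ℝ) (EuclideanSpace.single i (1 : ℝ)))

lemma Tr_apply (A : Euc N →L[ℝ] Euc N →L[ℝ] ℝ) :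
    Tr N A = ∑ i : Fin N, A (EuclideanSpace.single i 1) (EuclideanSpace.single i 1) := by
  simp [Tr]

lemma lap_eq (u : Euc N → ℝ) (u1 : Euc N → Euc N →L[ℝ] ℝ)
    (u2 : Euc N →L[ℝ] Euc N →L[ℝ] ℝ) (x : Euc N) (h1 : ∀ y, HasFDerivAt u (u1 y) y)
    (h2 : HasFDerivAt u1 u2 x) : lap N u x = Tr N u2 := by
  rw [Tr_apply, lap]
  refine Finset.sum_congr rfl fun i _ => ?_
  have : (fun y => fderiv ℝ u y (EuclideanSpace.single i 1))
      = fun y => u1 y (EuclideanSpace.single i 1) := by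
    ext y; rw [(h1 y).fderiv]
  rw [this, (h2.clm_apply (hasFDerivAt_const _ x)).fderiv]
  simp

lemma Tr_W2 (hK : 0 < K) {β : ℝ} (hβ : 0 < β) (hβ1 : β ≤ 1) (hh : Hol β h)
    (hB : ∀ x, |h x| ≤ B) (x : Euc N) :
    IntegrableOn (fun s => th K s * (s⁻¹ * Q gamL h s x)) (Ioi 0) ∧
    Tr N (W2 K h x) = ∫ s in Ioi (0 : ℝ), th K s * (s⁻¹ * Q gamL h s x) := by
  have hi := W2_int hK hβ hβ1 hh hB x
  have e : ∀ s, Tr N ((th K s * s⁻¹) • Q gam2 h s x) = th K s * (s⁻¹ * Q gamL h s x) := by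
    intro s
    rw [map_smul, smul_eq_mul, mul_assoc]
    congr 2
    unfold Q
    rw [← ContinuousLinearMap.integral_comp_comm _
      (Q_integrable (hh.continuous hβ).measurable hB gam2_cont gam2_decay s x)]
    refine integral_congr_ae (Eventually.of_forall fun z => ?_)
    simp only [map_smul]
    rw [Tr_apply, gam2_trace]
  constructor
  · have := (Tr N).integrable_comp hi
    simp only [e] at this
    exact this
  · rw [W2, ← ContinuousLinearMap.integral_comp_comm _ hi]
    simp only [e]

lemma Q_gam_zero (x : Euc N) : Q gam h 0 x = h x := by
  simp [Q, integral_const_mul, gam_integral]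

lemma th_hasDerivAt (K s : ℝ) : HasDerivAt (th K) (-(K * s) * th K s) s := by
  have := ((hasDerivAt_pow 2 s).const_mul (-(K / 2))).exp
  refine this.congr_deriv ?_
  simp [th]
  ring

lemma W_int (hK : 0 < K) (hh : Measurable h) (hB : ∀ x, |h x| ≤ B) (x : Euc N) :
    IntegrableOn (fun s => (s * th K s) • Q gam h s x) (Ioi 0) :=
  Integrable.smul_bdd (sth_int hK) (B * ∫ z : Euc N, ‖gam z‖)
      (Q_stronglyMeasurable hh gam_cont x).aestronglyMeasurable
      (Eventually.of_forall fun s => Q_bound hB gam_cont gam_decay s x)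

lemma th_tendsto (hK : 0 < K) : Tendsto (th K) atTop (𝓝 0) := by
  unfold th
  refine Real.tendsto_exp_atBot.comp ?_
  exact (tendsto_pow_atTop (two_ne_zero)).const_mul_atTop_of_neg (by linarith)

lemma W_pde (hK : 0 < K) {β : ℝ} (hβ : 0 < β) (hβ1 : β ≤ 1) (hh : Hol β h)
    (hB : ∀ x, |h x| ≤ B) (x : Euc N) : lap N (W K h) x = K * W K h x - h x := by
  have hm := (hh.continuous hβ).measurable
  rw [lap_eq (W K h) (W1 K h) (W2 K h x) x (W_hasFDerivAt hK hm hB)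
    (W1_hasFDerivAt hK hβ hβ1 hh hB x)]
  obtain ⟨hi2, e2⟩ := Tr_W2 hK hβ hβ1 hh hB x
  rw [e2]
  have hi0 := W_int hK hm hB x
  have key := integral_Ioi_of_hasDerivAt_of_tendsto (a := 0) (m := 0)
    (f := fun s => th K s * Q gam h s x)
    (f' := fun s => (-K) * ((s * th K s) • Q gam h s x) + th K s * (s⁻¹ * Q gamL h s x))
    ?_ ?_ ?_ ?_
  · rw [integral_add (hi0.const_mul _) hi2, integral_const_mul] at key
    rw [Q_gam_zero] at key
    have t0 : th K 0 = 1 := by simp [th]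
    rw [t0] at key
    unfold W
    linarith
  · have : Continuous (fun s => th K s * Q gam h s x) :=
      (th_cont K).mul ((Q_continuous (hh.continuous hβ) hB gam_cont gam_decay).comp
        (by fun_prop : Continuous fun s : ℝ => (s, x)))
    exact this.continuousWithinAt
  · intro s hs
    refine ((th_hasDerivAt K s).mul (Q_gam_deriv hm hB x hs)).congr_deriv ?_
    simp only [smul_eq_mul]
    ring
  · exact (hi0.const_mul _).add hi2
  · refine squeeze_zero_norm (a := fun s => th K s * (B * ∫ z : Euc N, ‖gam z‖)) (fun s => ?_) ?_
    · rw [norm_mul, Real.norm_of_nonneg (th_pos K s).le]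
      exact mul_le_mul_of_nonneg_left (Q_bound hB gam_cont gam_decay s x) (th_pos K s).le
    · simpa using (th_tendsto hK).mul_const (B * ∫ z : Euc N, ‖gam z‖)

lemma sth_integral (hK : 0 < K) : ∫ s in Ioi (0 : ℝ), s * th K s = K⁻¹ := by
  have key := integral_Ioi_of_hasDerivAt_of_tendsto (a := 0) (m := 0)
    (f := th K) (f' := fun s => (-K) * (s * th K s)) (th_cont K).continuousWithinAt
    (fun s _ => (th_hasDerivAt K s).congr_deriv (by ring)) ((sth_int hK).const_mul _)
    (th_tendsto hK)
  rw [integral_const_mul] at key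
  have t0 : th K 0 = 1 := by simp [th]
  rw [t0] at key
  field_simp
  linarith

lemma W_const (hK : 0 < K) (c : ℝ) (x : Euc N) : W K (fun _ => c) x = c / K := by
  have : ∀ s, Q gam (fun _ => c) s x = c := by
    intro s
    simp [Q, integral_const_mul, gam_integral]
  unfold W
  simp only [this, smul_eq_mul]
  rw [integral_mul_const, sth_integral hK]
  ring

lemma W_mono (hK : 0 < K) {g : Euc N → ℝ} (hh : Measurable h) (hB : ∀ x, |h x| ≤ B)
    (hg : Measurable g) (hB' : ∀ x, |g x| ≤ B) (hle : ∀ x, h x ≤ g x) (x : Euc N) :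
    W K h x ≤ W K g x := by
  refine setIntegral_mono_on (W_int hK hh hB x) (W_int hK hg hB' x) measurableSet_Ioi
    fun s hs => ?_
  refine mul_le_mul_of_nonneg_left ?_ (mul_pos hs (th_pos K s)).le
  refine integral_mono (Q_integrable hh hB gam_cont gam_decay s x)
    (Q_integrable hg hB' gam_cont gam_decay s x) fun z => ?_
  exact mul_le_mul_of_nonneg_right (hle _) (gam_pos z).le

lemma W_pos (hK : 0 < K) (hh : Continuous h) (hB : ∀ x, |h x| ≤ B) (h0 : ∀ x, 0 ≤ h x)
    {x₁ : Euc N} (h1 : 0 < h x₁) (x : Euc N) : 0 < W K h x := by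
  have hQ : ∀ s, 0 < s → 0 < Q gam h s x := by
    intro s hs
    have hc : Continuous fun z => h (x - s • z) • gam z := by
      have := gam_cont (N := N)
      fun_prop
    unfold Q
    have hnn : 0 ≤ fun z => h (x - s • z) • gam z :=
      fun z => mul_nonneg (h0 _) (gam_pos z).le
    rw [integral_pos_iff_support_of_nonneg hnn
      (Q_integrable hh.measurable hB gam_cont gam_decay s x)]
    refine hc.isOpen_support.measure_pos volume ⟨s⁻¹ • (x - x₁), ?_⟩
    · simp only [Function.mem_support]
      simp only [smul_inv_smul₀ hs.ne', sub_sub_cancel]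
      exact (mul_pos h1 (gam_pos _)).ne'
  have hnn : 0 ≤ᵐ[volume.restrict (Ioi (0 : ℝ))] fun s => (s * th K s) • Q gam h s x :=
    (ae_restrict_mem measurableSet_Ioi).mono fun s hs =>
      (mul_pos (mul_pos hs (th_pos K s)) (hQ s hs)).le
  unfold W
  rw [setIntegral_pos_iff_support_of_nonneg_ae hnn (W_int hK hh.measurable hB x)]
  have : Function.support (fun s => (s * th K s) • Q gam h s x) ∩ Ioi 0 = Ioi 0 := by
    refine inter_eq_right.2 fun s hs => ?_
    exact (mul_pos (mul_pos hs (th_pos K s)) (hQ s hs)).ne'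
  rw [this]
  simp

lemma W_tendsto (hK : 0 < K) {g : ℕ → Euc N → ℝ} (hg : ∀ n, Measurable (g n))
    (hgB : ∀ n x, |g n x| ≤ B) (hlim : ∀ x, Tendsto (fun n => g n x) atTop (𝓝 (h x)))
    (x : Euc N) : Tendsto (fun n => W K (g n) x) atTop (𝓝 (W K h x)) := by
  have hQ : ∀ s, Tendsto (fun n => Q gam (g n) s x) atTop (𝓝 (Q gam h s x)) := by
    intro s
    refine tendsto_integral_of_dominated_convergence (fun z => B * ‖gam z‖)
      (fun n => (Q_integrable (hg n) (hgB n) gam_cont gam_decay s x).aestronglyMeasurable)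
      ((gam_decay.integrable gam_cont).norm.const_mul B)
      (fun n => Eventually.of_forall fun z => ?_) (Eventually.of_forall fun z => ?_)
    · rw [norm_smul]
      exact mul_le_mul_of_nonneg_right (hgB n _) (norm_nonneg _)
    · exact (hlim _).smul_const _
  refine tendsto_integral_of_dominated_convergence
    (fun s => |s * th K s| * (B * ∫ z : Euc N, ‖gam z‖))
    (fun n => (W_int hK (hg n) (hgB n) x).aestronglyMeasurable)
    ((sth_int hK).norm.mul_const _)
    (fun n => Eventually.of_forall fun s => ?_) (Eventually.of_forall fun s => ?_)
  · rw [norm_smul]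
    exact mul_le_mul_of_nonneg_left (Q_bound (hgB n) gam_cont gam_decay s x) (norm_nonneg _)
  · exact (hQ s).const_smul _

end resolvent

section picone
variable {N : ℕ}

lemma norm_gradient_sq (φ : Euc N → ℝ) (x : Euc N) :
    ‖gradient φ x‖ ^ 2 = ∑ i : Fin N, (fderiv ℝ φ x (EuclideanSpace.single i 1)) ^ 2 := by
  rw [EuclideanSpace.norm_sq_eq]
  refine Finset.sum_congr rfl fun i _ => ?_
  have : fderiv ℝ φ x (EuclideanSpace.single i 1)
      = inner ℝ (gradient φ x) (EuclideanSpace.single i (1 : ℝ)) := by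
    rw [gradient, InnerProductSpace.toDual_symm_apply]
  rw [this, EuclideanSpace.inner_single_right]
  simp

lemma hcs_sq {g : Euc N → ℝ} (hg : HasCompactSupport g) :
    HasCompactSupport fun x => g x ^ 2 :=
  hg.mono fun x hx => by
    simp only [Function.mem_support] at hx ⊢
    exact fun h => hx (by rw [h]; norm_num)

lemma integral_fderiv_zero {X : Euc N → ℝ} (hX : ContDiff ℝ 1 X) (hc : HasCompactSupport X)
    (v : Euc N) : ∫ x, fderiv ℝ X x v = 0 := by
  have h1 : Continuous fun x => fderiv ℝ X x v :=
    (hX.continuous_fderiv (by norm_num)).clm_apply continuous_const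
  have h2 : HasCompactSupport fun x => fderiv ℝ X x v := hc.fderiv_apply ℝ v
  have := integral_mul_fderiv_eq_neg_fderiv_mul_of_integrable (μ := volume) (f := X)
    (g := fun _ => (1 : ℝ)) (v := v)
    (by simpa using h1.integrable_of_hasCompactSupport h2) (by simp)
    (by simpa using hX.continuous.integrable_of_hasCompactSupport hc)
    (fun x _ => (hX.differentiable (by norm_num)) x) (fun x _ => differentiableAt_const _)
  simpa using this

lemma picone {u φ : Euc N → ℝ} (hu : ContDiff ℝ 2 u) (hpos : ∀ x, 0 < u x)
    (hφ : ContDiff ℝ (⊤ : ℕ∞) φ) (hc : HasCompactSupport φ) :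
    ∫ x, φ x ^ 2 * (-lap N u x / u x) ≤ ∫ x, ‖gradient φ x‖ ^ 2 := by
  have hφ1 : ContDiff ℝ 1 φ := hφ.of_le (by exact_mod_cast le_top)
  have hu1 : ContDiff ℝ 1 u := hu.of_le (by norm_num)
  set e : Fin N → Euc N := fun i => EuclideanSpace.single i 1 with he
  have hq : ∀ i, ContDiff ℝ 1 (fun y => fderiv ℝ u y (e i)) := fun i =>
    (hu.fderiv_right (m := 1) (by norm_num)).clm_apply contDiff_const
  set r : Fin N → Euc N → ℝ := fun i x => fderiv ℝ (fun y => fderiv ℝ u y (e i)) x (e i) with hr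
  have hrc : ∀ i, Continuous (r i) := fun i =>
    ((hq i).continuous_fderiv (by norm_num)).clm_apply continuous_const
  have hpc : ∀ i, Continuous (fun x => fderiv ℝ φ x (e i)) := fun i =>
    (hφ1.continuous_fderiv (by norm_num)).clm_apply continuous_const
  have hne : ∀ x, u x ≠ 0 := fun x => (hpos x).ne'
  have hi1 : ∀ i, Integrable (fun x => (fderiv ℝ φ x (e i)) ^ 2) := fun i => by
    refine ((hpc i).pow 2).integrable_of_hasCompactSupport ?_
    exact hcs_sq (hc.fderiv_apply ℝ (e i))
  have hi2 : ∀ i, Integrable (fun x => φ x ^ 2 * (r i x / u x)) := fun i => by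
    refine (((hφ1.continuous).pow 2).mul
      ((hrc i).div hu1.continuous hne)).integrable_of_hasCompactSupport ?_
    exact (hcs_sq hc).mul_right
  have key : ∀ i, 0 ≤ ∫ x, ((fderiv ℝ φ x (e i)) ^ 2 + φ x ^ 2 * (r i x / u x)) := by
    intro i
    set X : Euc N → ℝ := fun x => φ x ^ 2 * (fderiv ℝ u x (e i) / u x) with hX
    have hX1 : ContDiff ℝ 1 X := (hφ1.pow 2).mul ((hq i).div hu1 hne)
    have hXc : HasCompactSupport X :=
      (hcs_sq hc).mul_right
    rw [← integral_fderiv_zero hX1 hXc (e i)]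
    have h1 : Continuous fun x => fderiv ℝ X x (e i) :=
      (hX1.continuous_fderiv (by norm_num)).clm_apply continuous_const
    refine integral_mono (h1.integrable_of_hasCompactSupport (hXc.fderiv_apply ℝ (e i)))
      ((hi1 i).add (hi2 i)) fun x => ?_
    have d1 := ((hφ1.differentiable (by norm_num)) x).hasFDerivAt
    have d2 := ((hu1.differentiable (by norm_num)) x).hasFDerivAt
    have d3 := (((hq i).differentiable (by norm_num)) x).hasFDerivAt
    have dX := (d1.pow 2).mul (d3.mul ((hasDerivAt_inv (hne x)).comp_hasFDerivAt x d2))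
    have hXe : X = fun x => φ x ^ 2 * (fderiv ℝ u x (e i) * (u x)⁻¹) := by
      ext y; simp only [hX, div_eq_mul_inv]
    have eX : fderiv ℝ X x (e i) = 2 * φ x * fderiv ℝ φ x (e i) * fderiv ℝ u x (e i) / u x
        + φ x ^ 2 * (r i x / u x) - φ x ^ 2 * (fderiv ℝ u x (e i)) ^ 2 / u x ^ 2 := by
      have := congrArg (fun A : Euc N →L[ℝ] ℝ => A (e i)) dX.fderiv
      rw [hXe]
      refine this.trans ?_
      simp [hr]
      have := hne x
      field_simp
      ring
    rw [eX]
    have sq := sq_nonneg (fderiv ℝ φ x (e i) - φ x * fderiv ℝ u x (e i) / u x)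
    have e2 : (fderiv ℝ φ x (e i) - φ x * fderiv ℝ u x (e i) / u x) ^ 2
      = (fderiv ℝ φ x (e i)) ^ 2 - 2 * φ x * fderiv ℝ φ x (e i) * fderiv ℝ u x (e i) / u x
        + φ x ^ 2 * (fderiv ℝ u x (e i)) ^ 2 / u x ^ 2 := by
      have := hne x
      field_simp
      ring
    rw [e2] at sq
    linarith
  have e1 : ∀ x, ‖gradient φ x‖ ^ 2 = ∑ i, (fderiv ℝ φ x (e i)) ^ 2 := norm_gradient_sq φ
  have e2 : ∀ x, φ x ^ 2 * (-lap N u x / u x) = - ∑ i, φ x ^ 2 * (r i x / u x) := by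
    intro x
    rw [← Finset.mul_sum, ← Finset.sum_div]
    simp only [hr, he, lap]
    ring
  simp only [e1, e2]
  rw [integral_neg, integral_finsetSum _ fun i _ => hi1 i,
    integral_finsetSum _ fun i _ => hi2 i, ← sub_nonneg, sub_neg_eq_add,
    ← Finset.sum_add_distrib]
  refine Finset.sum_nonneg fun i _ => ?_
  rw [← integral_add (hi1 i) (hi2 i)]
  exact key i

end picone

section Lampart
variable {N : ℕ} {V : Euc N → ℝ}

def admS (N : ℕ) (V : Euc N → ℝ) (R : ℝ) : Set ℝ :=
  { t : ℝ | ∃ u : Euc N → ℝ, ContDiff ℝ (⊤ : ℕ∞) u ∧ HasCompactSupport u ∧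
    tsupport u ⊆ ball (0 : Euc N) R ∧
    (∫ x, V x * u x ^ 2) = 1 ∧ t = ∫ x, ‖gradient u x‖ ^ 2 }

lemma admS_nonneg {R t : ℝ} (ht : t ∈ admS N V R) : 0 ≤ t := by
  obtain ⟨u, -, -, -, -, rfl⟩ := ht
  exact integral_nonneg fun x => by positivity

lemma admS_mono {R R' : ℝ} (h : R ≤ R') : admS N V R ⊆ admS N V R' := by
  rintro t ⟨u, h1, h2, h3, h4, h5⟩
  exact ⟨u, h1, h2, h3.trans (ball_subset_ball h), h4, h5⟩

lemma admS_nonempty (hV : Continuous V) {x₀ : Euc N} (h0 : 0 < V x₀) :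
    (admS N V (‖x₀‖ + 1)).Nonempty := by
  obtain ⟨δ, hδ, hb⟩ := Metric.continuousAt_iff.1 hV.continuousAt (V x₀) h0
  set ρ : ℝ := min δ 1 / 2 with hρ
  have hρ0 : 0 < ρ := by positivity
  have hρδ : ρ < δ := by have := min_le_left δ 1; have : 0 < min δ 1 := by positivity
                         linarith
  have hρ1 : ρ < 1 := by have := min_le_right δ 1; linarith
  let b : ContDiffBump x₀ := ⟨ρ / 2, ρ, by positivity, by linarith⟩
  have hVp : ∀ x ∈ ball x₀ δ, 0 < V x := by
    intro x hx
    have := hb hx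
    rw [Real.dist_eq] at this
    linarith [abs_lt.1 this]
  have hcont : Continuous fun x => V x * b x ^ 2 := hV.mul (b.continuous.pow 2)
  have hcs : HasCompactSupport fun x => V x * b x ^ 2 := (hcs_sq b.hasCompactSupport).mul_left
  have hI : Integrable fun x => V x * b x ^ 2 := hcont.integrable_of_hasCompactSupport hcs
  have hnn : 0 ≤ fun x => V x * b x ^ 2 := by
    intro x
    by_cases hx : x ∈ ball x₀ δ
    · exact mul_nonneg (hVp x hx).le (sq_nonneg _)
    · have : b x = 0 := b.zero_of_le_dist (hρδ.le.trans (not_lt.1 hx))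
      simp [this]
  have hpos : 0 < ∫ x, V x * b x ^ 2 := by
    rw [integral_pos_iff_support_of_nonneg hnn hI]
    refine hcont.isOpen_support.measure_pos volume ⟨x₀, ?_⟩
    have : b x₀ = 1 := b.one_of_mem_closedBall (mem_closedBall_self b.rIn_pos.le)
    simp [this, h0.ne']
  set I := ∫ x, V x * b x ^ 2 with hIdef
  have hts : tsupport (fun x => (Real.sqrt I)⁻¹ * b x) ⊆ tsupport b :=
    closure_mono fun x hx => by
      simp only [Function.mem_support] at hx ⊢
      exact right_ne_zero_of_mul hx
  refine ⟨_, fun x => (Real.sqrt I)⁻¹ * b x, contDiff_const.mul b.contDiff,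
    b.hasCompactSupport.mul_left, hts.trans ?_, ?_, rfl⟩
  · rw [b.tsupport_eq]
    intro x hx
    have : dist x x₀ ≤ ρ := hx
    rw [mem_ball_zero_iff]
    have h3 : ‖x‖ ≤ ‖x - x₀‖ + ‖x₀‖ := by simpa using norm_add_le (x - x₀) x₀
    rw [dist_eq_norm] at this
    linarith
  · have : ∀ x, V x * ((Real.sqrt I)⁻¹ * b x) ^ 2 = I⁻¹ * (V x * b x ^ 2) := by
      intro x
      rw [mul_pow, inv_pow, Real.sq_sqrt hpos.le]; ring
    simp only [this]
    rw [integral_const_mul, ← hIdef, inv_mul_cancel₀ hpos.ne']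

lemma exists_test (hV : Continuous V) (hp : ∃ x, 0 < V x) {lam : ℝ} (hlam : Lam N V < lam) :
    0 < lam ∧ ∃ φ : Euc N → ℝ, ContDiff ℝ (⊤ : ℕ∞) φ ∧ HasCompactSupport φ ∧
      (∫ x, V x * φ x ^ 2) = 1 ∧ ∫ x, ‖gradient φ x‖ ^ 2 < lam := by
  obtain ⟨x₀, h0⟩ := hp
  set R₀ := ‖x₀‖ + 1 with hR₀
  have hne : ∀ R, R₀ ≤ R → (admS N V R).Nonempty := fun R hR =>
    (admS_nonempty hV h0).mono (admS_mono hR)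
  have hbd : ∀ R, BddBelow (admS N V R) := fun R => ⟨0, fun t ht => admS_nonneg ht⟩
  have hl : ∀ R, lam1 N V R = sInf (admS N V R) := fun R => rfl
  have hanti : Antitone fun R => lam1 N V (max R R₀) := by
    intro R R' h
    simp only [hl]
    exact csInf_le_csInf (hbd _) (hne _ (le_max_right _ _))
      (admS_mono (max_le_max h le_rfl))
  have hnn : ∀ R, 0 ≤ lam1 N V R := fun R => Real.sInf_nonneg fun t ht => admS_nonneg ht
  have hbdd : BddBelow (range fun R => lam1 N V (max R R₀)) :=
    ⟨0, by rintro _ ⟨R, rfl⟩; exact hnn _⟩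
  have ht := tendsto_atTop_ciInf hanti hbdd
  have ht2 : Tendsto (lam1 N V) atTop (𝓝 (⨅ R, lam1 N V (max R R₀))) :=
    ht.congr' ((eventually_ge_atTop R₀).mono fun R hR => by simp only [max_eq_left hR])
  have hL : Lam N V = ⨅ R, lam1 N V (max R R₀) := ht2.limUnder_eq
  rw [← hL] at ht2
  have hL0 : 0 ≤ Lam N V := ge_of_tendsto' ht2 hnn
  refine ⟨lt_of_le_of_lt hL0 hlam, ?_⟩
  obtain ⟨R, hR, hR'⟩ := ((ht2.eventually (gt_mem_nhds hlam)).and (eventually_ge_atTop R₀)).exists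
  rw [hl] at hR
  obtain ⟨t, ⟨φ, h1, h2, -, h4, rfl⟩, ht⟩ := exists_lt_of_csInf_lt (hne R hR') hR
  exact ⟨φ, h1, h2, h4, ht⟩

end Lampart

section iteration
variable {N : ℕ}

/-- The data of the monotone iteration. -/
structure Dat (N : ℕ) (V : Euc N → ℝ) (f : ℝ → ℝ) (lam M L Cv K β : ℝ) : Prop where
  hlam : 0 < lam
  hM : 0 < M
  hL : 0 ≤ L
  hK : K = lam * (Cv + L) + 1
  hCv : ∀ x, |V x| ≤ Cv
  hβ : 0 < β
  hβ1 : β ≤ 1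
  hHol : Hol β V
  hf : Continuous f
  hf0 : f 0 = 0
  hf1 : HasDerivAt f 0 0
  hfn : ∀ u, 0 ≤ u → 0 ≤ f u
  hlip : ∀ a ∈ Icc 0 M, ∀ b ∈ Icc 0 M, |f a - f b| ≤ L * |a - b|
  hfM : ∀ x, V x * M ≤ f M

def G (V : Euc N → ℝ) (f : ℝ → ℝ) (lam K : ℝ) (u : Euc N → ℝ) (x : Euc N) : ℝ :=
  K * u x + lam * (V x * u x - f (u x))

def Good (M : ℝ) (u : Euc N → ℝ) : Prop := Measurable u ∧ ∀ x, u x ∈ Icc 0 M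

def useq (V : Euc N → ℝ) (f : ℝ → ℝ) (lam K M : ℝ) : ℕ → Euc N → ℝ
  | 0 => fun _ => M
  | n + 1 => W K (G V f lam K (useq V f lam K M n))

variable {V : Euc N → ℝ} {f : ℝ → ℝ} {lam M L Cv K β : ℝ}

namespace Dat

lemma Cv_nonneg (D : Dat N V f lam M L Cv K β) : 0 ≤ Cv := (abs_nonneg _).trans (D.hCv 0)

lemma K_pos (D : Dat N V f lam M L Cv K β) : 0 < K := by
  rw [D.hK]
  have := D.Cv_nonneg
  have := D.hL
  have := D.hlam
  positivity

lemma V_cont (D : Dat N V f lam M L Cv K β) : Continuous V := D.hHol.continuous D.hβ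

lemma F_mono (D : Dat N V f lam M L Cv K β) (x : Euc N) {a b : ℝ} (ha : 0 ≤ a) (hab : a ≤ b) (hb : b ≤ M) :
    K * a + lam * (V x * a - f a) + (b - a) ≤ K * b + lam * (V x * b - f b) := by
  have h1 := D.hlip b ⟨ha.trans hab, hb⟩ a ⟨ha, hab.trans hb⟩
  rw [abs_of_nonneg (sub_nonneg.2 hab)] at h1
  have h2 := (le_abs_self _).trans h1
  have h3 : -Cv ≤ V x := (abs_le.1 (D.hCv x)).1
  have h4 : 0 ≤ (V x + Cv) * (b - a) := mul_nonneg (by linarith) (by linarith)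
  have h5 : 0 ≤ lam * ((V x + Cv) * (b - a) + (L * (b - a) - (f b - f a))) :=
    mul_nonneg D.hlam.le (by linarith)
  rw [D.hK]
  nlinarith

lemma G_ge (D : Dat N V f lam M L Cv K β) {u : Euc N → ℝ} (hu : Good M u) (x : Euc N) : u x ≤ G V f lam K u x := by
  have := D.F_mono x le_rfl (hu.2 x).1 (hu.2 x).2
  simp only [mul_zero, D.hf0, sub_zero, zero_add] at this
  exact this

lemma G_nonneg (D : Dat N V f lam M L Cv K β) {u : Euc N → ℝ} (hu : Good M u) (x : Euc N) : 0 ≤ G V f lam K u x :=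
  (hu.2 x).1.trans (D.G_ge hu x)

lemma G_le (D : Dat N V f lam M L Cv K β) {u : Euc N → ℝ} (hu : Good M u) (x : Euc N) : G V f lam K u x ≤ K * M := by
  have h1 := D.F_mono x (hu.2 x).1 (hu.2 x).2 le_rfl
  have h2 : lam * (V x * M - f M) ≤ 0 :=
    mul_nonpos_of_nonneg_of_nonpos D.hlam.le (sub_nonpos.2 (D.hfM x))
  have h3 := (hu.2 x).2
  unfold G
  linarith

lemma G_abs (D : Dat N V f lam M L Cv K β) {u : Euc N → ℝ} (hu : Good M u) (x : Euc N) : |G V f lam K u x| ≤ K * M := by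
  rw [abs_of_nonneg (D.G_nonneg hu x)]
  exact D.G_le hu x

lemma G_meas (D : Dat N V f lam M L Cv K β) {u : Euc N → ℝ} (hu : Good M u) : Measurable (G V f lam K u) := by
  have h1 := hu.1
  have h2 := D.V_cont.measurable
  have h3 := D.hf.measurable
  unfold G
  fun_prop

lemma G_mono (D : Dat N V f lam M L Cv K β) {u v : Euc N → ℝ} (hu : Good M u) (hv : Good M v) (huv : ∀ x, u x ≤ v x)
    (x : Euc N) : G V f lam K u x ≤ G V f lam K v x := by
  have := D.F_mono x (hu.2 x).1 (huv x) (hv.2 x).2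
  have := huv x
  unfold G
  linarith

lemma W_cont (D : Dat N V f lam M L Cv K β) {u : Euc N → ℝ} (hu : Good M u) : Continuous (W K (G V f lam K u)) :=
  continuous_iff_continuousAt.2 fun x =>
    (W_hasFDerivAt D.K_pos (D.G_meas hu) (D.G_abs hu) x).continuousAt

lemma W_good (D : Dat N V f lam M L Cv K β) {u : Euc N → ℝ} (hu : Good M u) : Good M (W K (G V f lam K u)) := by
  refine ⟨(D.W_cont hu).measurable, fun x => ⟨?_, ?_⟩⟩
  · have h1 : ∀ x : Euc N, |(fun _ => (0 : ℝ)) x| ≤ K * M := fun x => by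
      simpa using (mul_pos D.K_pos D.hM).le
    have := W_mono D.K_pos measurable_const h1 (D.G_meas hu) (D.G_abs hu) (D.G_nonneg hu) x
    rwa [W_const D.K_pos, zero_div] at this
  · have h1 : ∀ x : Euc N, |(fun _ => K * M) x| ≤ K * M := fun x => by
      simp only [abs_of_pos (mul_pos D.K_pos D.hM), le_refl]
    have := W_mono D.K_pos (D.G_meas hu) (D.G_abs hu) measurable_const h1 (D.G_le hu) x
    rwa [W_const D.K_pos, mul_div_cancel_left₀ _ D.K_pos.ne'] at this

lemma G_hol (D : Dat N V f lam M L Cv K β) {u : Euc N → ℝ} (hu : Good M u)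
    (hl : ∃ l : ℝ, 0 ≤ l ∧ ∀ x y, |u x - u y| ≤ l * ‖x - y‖) : Hol β (G V f lam K u) := by
  obtain ⟨l, hl0, hl⟩ := hl
  obtain ⟨C, hC0, hC⟩ := D.hHol
  have hKp := D.K_pos
  have hlam := D.hlam
  have hM := D.hM
  have hL := D.hL
  have hCv := D.Cv_nonneg
  have hul : ∀ x y, |u x - u y| ≤ max l M * ‖x - y‖ ^ β := by
    intro x y
    rcases le_total ‖x - y‖ 1 with h | h
    · refine (hl x y).trans ?_
      have : ‖x - y‖ ≤ ‖x - y‖ ^ β := by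
        rcases (norm_nonneg (x - y)).eq_or_lt with h0 | h0
        · rw [← h0]; exact Real.rpow_nonneg le_rfl _
        · simpa using Real.rpow_le_rpow_of_exponent_ge h0 h D.hβ1
      exact mul_le_mul (le_max_left _ _) this (norm_nonneg _) (hl0.trans (le_max_left _ _))
    · have h1 : |u x - u y| ≤ M := by
        have := hu.2 x; have := hu.2 y
        rw [abs_le]; constructor <;> linarith [(hu.2 x).1, (hu.2 x).2, (hu.2 y).1, (hu.2 y).2]
      have h2 : 1 ≤ ‖x - y‖ ^ β := Real.one_le_rpow h D.hβ.le
      calc |u x - u y| ≤ M * 1 := by linarith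
        _ ≤ max l M * ‖x - y‖ ^ β :=
          mul_le_mul (le_max_right _ _) h2 zero_le_one (hl0.trans (le_max_left _ _))
  have hmax : 0 ≤ max l M := hl0.trans (le_max_left _ _)
  refine ⟨(K + lam * (Cv + L)) * max l M + lam * (C * M), by positivity, fun x y => ?_⟩
  have e : G V f lam K u x - G V f lam K u y = (K + lam * V x) * (u x - u y)
      + lam * ((V x - V y) * u y) - lam * (f (u x) - f (u y)) := by
    unfold G; ring
  have a1 : |(K + lam * V x) * (u x - u y)| ≤ (K + lam * Cv) * |u x - u y| := by
    rw [abs_mul]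
    refine mul_le_mul_of_nonneg_right ?_ (abs_nonneg _)
    refine (abs_add_le _ _).trans ?_
    rw [abs_of_pos hKp, abs_mul, abs_of_pos hlam]
    have := mul_le_mul_of_nonneg_left (D.hCv x) hlam.le
    linarith
  have a2 : |lam * ((V x - V y) * u y)| ≤ lam * (C * ‖x - y‖ ^ β * M) := by
    rw [abs_mul, abs_of_pos hlam, abs_mul, abs_of_nonneg (hu.2 y).1]
    refine mul_le_mul_of_nonneg_left ?_ hlam.le
    exact mul_le_mul (hC x y) (hu.2 y).2 (hu.2 y).1
      (mul_nonneg hC0 (Real.rpow_nonneg (norm_nonneg _) _))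
  have a3 : |lam * (f (u x) - f (u y))| ≤ lam * (L * |u x - u y|) := by
    rw [abs_mul, abs_of_pos hlam]
    exact mul_le_mul_of_nonneg_left (D.hlip _ (hu.2 x) _ (hu.2 y)) hlam.le
  rw [e]
  have a4 : (K + lam * (Cv + L)) * |u x - u y|
      ≤ (K + lam * (Cv + L)) * (max l M * ‖x - y‖ ^ β) :=
    mul_le_mul_of_nonneg_left (hul x y) (by positivity)
  have a5 := abs_sub ((K + lam * V x) * (u x - u y) + lam * ((V x - V y) * u y))
    (lam * (f (u x) - f (u y)))
  have a6 := abs_add_le ((K + lam * V x) * (u x - u y)) (lam * ((V x - V y) * u y))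
  nlinarith

lemma seq_good (D : Dat N V f lam M L Cv K β) (n : ℕ) : Good M (useq V f lam K M n) := by
  induction n with
  | zero => exact ⟨measurable_const, fun x => ⟨D.hM.le, le_rfl⟩⟩
  | succ n ih => exact D.W_good ih

lemma seq_lip (D : Dat N V f lam M L Cv K β) (n : ℕ) : ∃ l : ℝ, 0 ≤ l ∧ ∀ x y,
    |useq V f lam K M n x - useq V f lam K M n y| ≤ l * ‖x - y‖ := by
  cases n with
  | zero => exact ⟨0, le_rfl, fun x y => by simp [useq]⟩
  | succ n => exact W_lip D.K_pos (D.G_meas (D.seq_good n)) (D.G_abs (D.seq_good n))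

lemma seq_hol (D : Dat N V f lam M L Cv K β) (n : ℕ) : Hol β (G V f lam K (useq V f lam K M n)) :=
  D.G_hol (D.seq_good n) (D.seq_lip n)

lemma seq_cont (D : Dat N V f lam M L Cv K β) (n : ℕ) : Continuous (useq V f lam K M n) := by
  cases n with
  | zero => exact continuous_const
  | succ n => exact D.W_cont (D.seq_good n)

lemma seq_pos (D : Dat N V f lam M L Cv K β) (n : ℕ) : ∀ x, 0 < useq V f lam K M n x := by
  induction n with
  | zero => exact fun x => D.hM
  | succ n ih =>
    exact fun x => W_pos D.K_pos ((D.seq_hol n).continuous D.hβ) (D.G_abs (D.seq_good n))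
      (D.G_nonneg (D.seq_good n)) ((ih 0).trans_le (D.G_ge (D.seq_good n) 0)) x

lemma seq_succ_le (D : Dat N V f lam M L Cv K β) (n : ℕ) : ∀ x, useq V f lam K M (n + 1) x ≤ useq V f lam K M n x := by
  induction n with
  | zero => exact fun x => ((D.seq_good 1).2 x).2
  | succ n ih =>
    exact fun x => W_mono D.K_pos (D.G_meas (D.seq_good (n + 1))) (D.G_abs (D.seq_good (n + 1)))
      (D.G_meas (D.seq_good n)) (D.G_abs (D.seq_good n))
      (D.G_mono (D.seq_good (n + 1)) (D.seq_good n) ih) x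

lemma seq_tendsto (D : Dat N V f lam M L Cv K β) : ∃ u : Euc N → ℝ,
    (∀ x, Tendsto (fun n => useq V f lam K M n x) atTop (𝓝 (u x))) := by
  refine ⟨fun x => ⨅ n, useq V f lam K M n x, fun x => ?_⟩
  refine tendsto_atTop_ciInf (antitone_nat_of_succ_le fun n => D.seq_succ_le n x) ⟨0, ?_⟩
  rintro _ ⟨n, rfl⟩
  exact ((D.seq_good n).2 x).1

lemma ratio_le (D : Dat N V f lam M L Cv K β) {t : ℝ} (ht : 0 < t) (htM : t ≤ M) : |f t / t| ≤ L := by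
  have h := D.hlip t ⟨ht.le, htM⟩ 0 ⟨le_rfl, D.hM.le⟩
  rw [D.hf0, sub_zero, sub_zero, abs_of_pos ht] at h
  rw [abs_div, abs_of_pos ht, div_le_iff₀ ht]
  exact h

lemma test_n (D : Dat N V f lam M L Cv K β) {φ : Euc N → ℝ} (hφ : ContDiff ℝ (⊤ : ℕ∞) φ) (hc : HasCompactSupport φ) (n : ℕ) :
    ∫ x, φ x ^ 2 * (lam * (V x - f (useq V f lam K M n x) / useq V f lam K M n x))
      ≤ ∫ x, ‖gradient φ x‖ ^ 2 := by
  have hg := D.seq_good n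
  have hC2 : ContDiff ℝ 2 (useq V f lam K M (n + 1)) :=
    W_contDiff D.K_pos D.hβ D.hβ1 (D.seq_hol n) (D.G_abs hg)
  refine le_trans ?_ (picone hC2 (D.seq_pos (n + 1)) hφ hc)
  have hlap : ∀ x, lap N (useq V f lam K M (n + 1)) x
      = K * useq V f lam K M (n + 1) x - G V f lam K (useq V f lam K M n) x := fun x =>
    W_pde D.K_pos D.hβ D.hβ1 (D.seq_hol n) (D.G_abs hg) x
  simp only [hlap]
  have c0 := D.seq_cont n
  have c1 := D.seq_cont (n + 1)
  have cG := (D.seq_hol n).continuous D.hβ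
  have cV := D.V_cont
  have cφ := hφ.continuous
  have n0 := fun x => (D.seq_pos n x).ne'
  have n1 := fun x => (D.seq_pos (n + 1) x).ne'
  refine integral_mono ?_ ?_ fun x => ?_
  · refine Continuous.integrable_of_hasCompactSupport ?_ (hcs_sq hc).mul_right
    exact (cφ.pow 2).mul (continuous_const.mul (cV.sub ((D.hf.comp c0).div c0 n0)))
  · refine Continuous.integrable_of_hasCompactSupport ?_ (hcs_sq hc).mul_right
    exact (cφ.pow 2).mul ((((continuous_const.mul c1).sub cG).neg).div c1 n1)
  · refine mul_le_mul_of_nonneg_left ?_ (sq_nonneg _)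
    have hle := D.seq_succ_le n x
    have p0 := D.seq_pos n x
    have p1 := D.seq_pos (n + 1) x
    have hge := D.G_ge hg x
    have hGe : G V f lam K (useq V f lam K M n) x = K * useq V f lam K M n x
      + lam * (V x * useq V f lam K M n x - f (useq V f lam K M n x)) := rfl
    generalize G V f lam K (useq V f lam K M n) x = g at *
    generalize useq V f lam K M n x = a at *
    generalize useq V f lam K M (n + 1) x = b at *
    have e1 : lam * (V x - f a / a) = g / a - K := by
      rw [hGe]; field_simp; ring
    have e2 : -(K * b - g) / b = g / b - K := by field_simp; ring
    rw [e1, e2]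
    have : g / a ≤ g / b := div_le_div_of_nonneg_left (by linarith) p1 hle
    linarith

lemma test_lim (D : Dat N V f lam M L Cv K β) {φ : Euc N → ℝ} (hφ : ContDiff ℝ (⊤ : ℕ∞) φ) (hc : HasCompactSupport φ)
    (h0 : ∀ x, Tendsto (fun n => useq V f lam K M n x) atTop (𝓝 0)) :
    lam * ∫ x, V x * φ x ^ 2 ≤ ∫ x, ‖gradient φ x‖ ^ 2 := by
  have hr : Tendsto (fun t => f t / t) (𝓝[>] 0) (𝓝 0) := by
    have := (hasDerivAt_iff_tendsto_slope.1 D.hf1).mono_left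
      (nhdsWithin_mono (0 : ℝ) (fun t (ht : t ∈ Ioi (0 : ℝ)) => ne_of_gt ht))
    refine this.congr fun t => ?_
    rw [slope_def_field, D.hf0, sub_zero, sub_zero]
  have key : Tendsto (fun n => ∫ x, φ x ^ 2 *
      (lam * (V x - f (useq V f lam K M n x) / useq V f lam K M n x))) atTop
      (𝓝 (∫ x, φ x ^ 2 * (lam * (V x - 0)))) := by
    refine tendsto_integral_of_dominated_convergence (fun x => φ x ^ 2 * (lam * (Cv + L)))
      (fun n => ?_) ?_ (fun n => Eventually.of_forall fun x => ?_)
      (Eventually.of_forall fun x => ?_)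
    · have c0 := D.seq_cont n
      have n0 := fun x => (D.seq_pos n x).ne'
      exact ((hφ.continuous.pow 2).mul (continuous_const.mul
        (D.V_cont.sub ((D.hf.comp c0).div c0 n0)))).aestronglyMeasurable
    · exact (((hφ.continuous).pow 2).integrable_of_hasCompactSupport (hcs_sq hc)).mul_const _
    · rw [norm_mul, Real.norm_of_nonneg (sq_nonneg _), norm_mul, Real.norm_of_nonneg D.hlam.le]
      refine mul_le_mul_of_nonneg_left (mul_le_mul_of_nonneg_left ?_ D.hlam.le) (sq_nonneg _)
      refine (abs_sub _ _).trans (add_le_add (D.hCv x) ?_)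
      exact D.ratio_le (D.seq_pos n x) ((D.seq_good n).2 x).2
    · refine ((tendsto_const_nhds.sub ?_).const_mul lam).const_mul (φ x ^ 2)
      exact hr.comp (tendsto_nhdsWithin_iff.2 ⟨h0 x, Eventually.of_forall fun n => D.seq_pos n x⟩)
  have := le_of_tendsto' key (D.test_n hφ hc)
  rw [← integral_const_mul]
  refine le_trans (le_of_eq ?_) this
  congr 1
  ext x
  ring

theorem main (D : Dat N V f lam M L Cv K β) {φ : Euc N → ℝ} (hφ : ContDiff ℝ (⊤ : ℕ∞) φ) (hc : HasCompactSupport φ)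
    (h1 : (∫ x, V x * φ x ^ 2) = 1) (h2 : ∫ x, ‖gradient φ x‖ ^ 2 < lam) :
    ∃ u : Euc N → ℝ, ContDiff ℝ 2 u ∧ (∀ x, 0 < u x) ∧
      ∀ x, -lap N u x = lam * (V x * u x - f (u x)) := by
  obtain ⟨u, hu⟩ := D.seq_tendsto
  have hg : Good M u := by
    refine ⟨measurable_of_tendsto_metrizable (fun n => (D.seq_good n).1)
      (tendsto_pi_nhds.2 hu), fun x => ?_⟩
    exact isClosed_Icc.mem_of_tendsto (hu x) (Eventually.of_forall fun n => (D.seq_good n).2 x)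
  have hfix : W K (G V f lam K u) = u := by
    ext x
    have hl : ∀ x, Tendsto (fun n => G V f lam K (useq V f lam K M n) x) atTop
        (𝓝 (G V f lam K u x)) := fun x =>
      ((hu x).const_mul K).add ((((hu x).const_mul (V x)).sub
        ((D.hf.tendsto (u x)).comp (hu x))).const_mul lam)
    have := W_tendsto D.K_pos (fun n => D.G_meas (D.seq_good n))
      (fun n => D.G_abs (D.seq_good n)) hl x
    exact tendsto_nhds_unique this ((tendsto_add_atTop_iff_nat 1).2 (hu x))
  have hlip : ∃ l : ℝ, 0 ≤ l ∧ ∀ x y, |u x - u y| ≤ l * ‖x - y‖ := by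
    have := W_lip D.K_pos (D.G_meas hg) (D.G_abs hg)
    rwa [hfix] at this
  have hH := D.G_hol hg hlip
  have hex : ∃ x₁, 0 < u x₁ := by
    by_contra! hne
    have hz : ∀ x, u x = 0 := fun x => le_antisymm (hne x) (hg.2 x).1
    have := D.test_lim hφ hc (fun x => by simpa only [hz x] using hu x)
    rw [h1] at this
    linarith
  obtain ⟨x₁, hx₁⟩ := hex
  refine ⟨u, ?_, fun x => ?_, fun x => ?_⟩
  · have := W_contDiff D.K_pos D.hβ D.hβ1 hH (D.G_abs hg)
    rwa [hfix] at this
  · have := W_pos D.K_pos (hH.continuous D.hβ) (D.G_abs hg) (D.G_nonneg hg)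
      (hx₁.trans_le (D.G_ge hg x₁)) x
    rwa [hfix] at this
  · have := W_pde D.K_pos D.hβ D.hβ1 hH (D.G_abs hg) x
    rw [hfix] at this
    rw [this]
    unfold G
    ring

end Dat
end iteration

/-- for every `λ > Λ`, the logistic equation has an entire positive solution
(no decay at infinity asserted). -/
theorem stmt4 (N : ℕ) (hN : 3 ≤ N) (V V₁ V₂ : Euc N → ℝ)
    (hV : CondV N V V₁ V₂)
    (f : ℝ → ℝ) (hf : CondF N V f)
    (lam : ℝ) (hlam : Lam N V < lam) :
    ∃ u : Euc N → ℝ, ContDiff ℝ 2 u ∧ (∀ x, 0 < u x) ∧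
      ∀ x, -lap N u x = lam * (V x * u x - f (u x)) := by
  obtain ⟨⟨C, β, hβ0, hβ1, hHW⟩, ⟨Cb, hCb⟩, hp, -, -, -⟩ := hV
  obtain ⟨hf1, hfn, hf0, hd0, -, -, l, hl, hsup⟩ := hf
  have hHol : Hol (β : ℝ) V := by
    refine ⟨C, C.2, fun x y => ?_⟩
    have := hHW.dist_le x y
    rwa [Real.dist_eq, dist_eq_norm] at this
  have hβ : (0 : ℝ) < β := hβ0
  have hcont := hHol.continuous hβ
  obtain ⟨hlam0, φ, hφ, hc, h1, h2⟩ := exists_test hcont hp hlam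
  have hbdd : BddAbove (range fun x => |V x|) := ⟨Cb, by rintro _ ⟨x, rfl⟩; exact hCb x⟩
  have hCv : ∀ x, |V x| ≤ ⨆ x, |V x| := fun x => le_ciSup hbdd x
  obtain ⟨M, hM1, hM⟩ := ((hl.eventually (lt_mem_nhds hsup)).and (eventually_gt_atTop 0)).exists
  have hM1 : (⨆ x, |V x|) < f M / M := by exact_mod_cast hM1
  have hdc : Continuous (deriv f) := hf1.continuous_deriv (by norm_num)
  obtain ⟨L, hL⟩ := isCompact_Icc.exists_bound_of_continuousOn (s := Icc (0 : ℝ) M)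
    hdc.continuousOn
  have hdiff := hf1.differentiable (by norm_num)
  have D : Dat N V f lam M L (⨆ x, |V x|) (lam * ((⨆ x, |V x|) + L) + 1) β := by
    refine ⟨hlam0, hM, (norm_nonneg _).trans (hL 0 ⟨le_rfl, hM.le⟩), rfl, hCv, hβ,
      by exact_mod_cast hβ1, hHol, hf1.continuous, hf0, ?_, hfn, ?_, ?_⟩
    · have := (hdiff 0).hasDerivAt
      rwa [hd0] at this
    · intro a ha b hb
      exact (convex_Icc (0 : ℝ) M).norm_image_sub_le_of_norm_deriv_le
        (fun x _ => hdiff x) hL hb ha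
    · intro x
      rw [lt_div_iff₀ hM] at hM1
      refine le_trans ?_ hM1.le
      exact mul_le_mul_of_nonneg_right ((le_abs_self _).trans (hCv x)) hM.le
  exact D.main hφ hc h1 h2

end
end

section
/- Let N ≥ 3, let V satisfy condition (V) and the decay condition that there exist A, α > 0 with V⁺(x) ≤ A|x|^{-2-α} for all x ∈ ℝ^N, let f satisfy conditions (f1), (f2), (f3), let λ > 0, and let u be a solution of problem (P_λ). Then there exists a constant C > 0 such that u(x) ≤ C|x|^{2-N} for all x ∈ ℝ^N, x ≠ 0. -/
open MeasureTheory Filter Metric Set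
open scoped ENNReal NNReal Topology

noncomputable section

/-- Pointwise Laplacian along coordinate lines. -/
def HasLap (N : ℕ) (s : Euc N → ℝ) (x : Euc N) (L : ℝ) : Prop :=
  ∃ (d : Fin N → ℝ → ℝ) (b : Fin N → ℝ),
    (∀ i, ∀ᶠ t in 𝓝 (0 : ℝ),
      HasDerivAt (fun t : ℝ => s (x + t • EuclideanSpace.single i (1 : ℝ))) (d i t) t) ∧
    (∀ i, HasDerivAt (d i) (b i) 0) ∧ ∑ i, b i = L

lemma HasLap.add {N : ℕ} {s t : Euc N → ℝ} {x : Euc N} {L M : ℝ}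
    (hs : HasLap N s x L) (ht : HasLap N t x M) :
    HasLap N (fun y => s y + t y) x (L + M) := by
  obtain ⟨d, b, h1, h2, h3⟩ := hs
  obtain ⟨d', b', h1', h2', h3'⟩ := ht
  refine ⟨fun i t => d i t + d' i t, fun i => b i + b' i, ?_, ?_, ?_⟩
  · intro i
    filter_upwards [h1 i, h1' i] with r hr hr'
    exact hr.add hr'
  · intro i
    exact (h2 i).add (h2' i)
  · rw [Finset.sum_add_distrib, h3, h3']

lemma HasLap.const_mul {N : ℕ} {s : Euc N → ℝ} {x : Euc N} {L : ℝ}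
    (hs : HasLap N s x L) (c : ℝ) :
    HasLap N (fun y => c * s y) x (c * L) := by
  obtain ⟨d, b, h1, h2, h3⟩ := hs
  refine ⟨fun i t => c * d i t, fun i => c * b i, ?_, ?_, ?_⟩
  · intro i
    filter_upwards [h1 i] with r hr
    exact hr.const_mul c
  · intro i
    exact (h2 i).const_mul c
  · rw [← Finset.mul_sum, h3]

lemma hasLap_const {N : ℕ} (c : ℝ) (x : Euc N) : HasLap N (fun _ => c) x 0 := by
  refine ⟨fun _ _ => 0, fun _ => 0, ?_, ?_, ?_⟩
  · intro i
    exact Eventually.of_forall fun t => hasDerivAt_const _ _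
  · intro i
    exact hasDerivAt_const _ _
  · simp

lemma hasDerivAt_line {N : ℕ} (x e : Euc N) (t : ℝ) :
    HasDerivAt (fun t : ℝ => x + t • e) e t := by
  simpa using ((hasDerivAt_id t).smul_const e).const_add x

lemma hasLap_of_contDiff {N : ℕ} {u : Euc N → ℝ} (hu : ContDiff ℝ 2 u) (x : Euc N) :
    HasLap N u x (lap N u x) := by
  have h1 : Differentiable ℝ u := hu.differentiable (by norm_num)
  have h2 : ∀ e : Euc N, Differentiable ℝ (fun y => fderiv ℝ u y e) := by
    intro e
    have : ContDiff ℝ 1 (fderiv ℝ u) := hu.fderiv_right (by norm_num)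
    exact (this.differentiable (by norm_num)).clm_apply (differentiable_const e)
  refine ⟨fun i t => fderiv ℝ u (x + t • EuclideanSpace.single i (1:ℝ))
      (EuclideanSpace.single i (1:ℝ)), fun i => fderiv ℝ (fun y => fderiv ℝ u y
      (EuclideanSpace.single i 1)) x (EuclideanSpace.single i 1), ?_, ?_, rfl⟩
  · intro i
    refine Eventually.of_forall fun t => ?_
    exact (h1 _).hasFDerivAt.comp_hasDerivAt t (hasDerivAt_line x _ t)
  · intro i
    have := ((h2 (EuclideanSpace.single i (1:ℝ))) (x + (0:ℝ) •
      EuclideanSpace.single i (1:ℝ))).hasFDerivAt.comp_hasDerivAt (0:ℝ) (hasDerivAt_line x _ 0)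
    rw [zero_smul, add_zero] at this
    exact this

lemma norm_sq_line {N : ℕ} (x : Euc N) (i : Fin N) (t : ℝ) :
    ‖x + t • EuclideanSpace.single i (1:ℝ)‖ ^ 2 = ‖x‖ ^ 2 + 2 * t * x i + t ^ 2 := by
  rw [norm_add_sq_real, inner_smul_right, EuclideanSpace.inner_single_right, norm_smul]
  simp
  ring

lemma hasLap_rpow {N : ℕ} (p : ℝ) {x : Euc N} (hx : x ≠ 0) :
    HasLap N (fun y => ‖y‖ ^ p) x (p * (p - 2 + N) * ‖x‖ ^ (p - 2)) := by
  have hr : 0 < ‖x‖ := norm_pos_iff.mpr hx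
  have hq : ∀ (i : Fin N) (t : ℝ), HasDerivAt (fun t : ℝ => ‖x‖ ^ 2 + 2 * t * x i + t ^ 2)
      (2 * x i + 2 * t) t := by
    intro i t
    have := ((((hasDerivAt_id t).const_mul 2).mul_const (x i)).const_add (‖x‖ ^ 2)).add
      ((hasDerivAt_id t).pow 2)
    refine this.congr_deriv ?_
    simp
  have hne : ∀ i : Fin N, ∀ᶠ t in 𝓝 (0:ℝ), ‖x‖ ^ 2 + 2 * t * x i + t ^ 2 ≠ 0 := by
    intro i
    refine ((hq i 0).continuousAt).eventually_ne ?_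
    simp [hr.ne']
  refine ⟨fun i t => (2 * x i + 2 * t) * (p / 2) *
      (‖x‖ ^ 2 + 2 * t * x i + t ^ 2) ^ (p / 2 - 1),
    fun i => p * ‖x‖ ^ (p - 2) + p * (p - 2) * ‖x‖ ^ (p - 4) * (x i) ^ 2, ?_, ?_, ?_⟩
  · intro i
    filter_upwards [hne i] with t ht
    have h := (hq i t).rpow_const (p := p / 2) (Or.inl ht)
    refine h.congr_of_eventuallyEq (Eventually.of_forall fun t => ?_)
    change ‖x + t • EuclideanSpace.single i (1:ℝ)‖ ^ p = _
    beta_reduce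
    rw [← norm_sq_line, ← Real.rpow_natCast, ← Real.rpow_mul (norm_nonneg _)]
    congr 1
    push_cast
    ring
  · intro i
    have h := (hq i 0).rpow_const (p := p / 2 - 1) (Or.inl (hne i).self_of_nhds)
    have h' := (((hasDerivAt_id (0:ℝ)).const_mul 2).const_add (2 * x i)).mul_const (p / 2)
    have := h'.mul h
    refine this.congr_deriv ?_
    have e1 : (‖x‖ ^ 2) ^ (p / 2 - 1) = ‖x‖ ^ (p - 2) := by
      rw [← Real.rpow_natCast, ← Real.rpow_mul (norm_nonneg _)]
      congr 1
      push_cast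
      ring
    have e2 : (‖x‖ ^ 2) ^ (p / 2 - 1 - 1) = ‖x‖ ^ (p - 4) := by
      rw [← Real.rpow_natCast, ← Real.rpow_mul (norm_nonneg _)]
      congr 1
      push_cast
      ring
    simp only [id, mul_zero, zero_mul, add_zero, ne_eq, OfNat.ofNat_ne_zero, not_false_eq_true,
      zero_pow, e1, e2]
    ring
  · rw [Finset.sum_add_distrib, ← Finset.mul_sum, ← Finset.mul_sum, ← EuclideanSpace.real_norm_sq_eq]
    have e3 : ‖x‖ ^ (p - 4) * ‖x‖ ^ 2 = ‖x‖ ^ (p - 2) := by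
      rw [← Real.rpow_natCast, ← Real.rpow_add hr]
      congr 1
      push_cast
      ring
    rw [mul_assoc _ (‖x‖ ^ (p - 4)), e3]
    simp
    ring

lemma second_deriv_nonpos {φ d : ℝ → ℝ} {b : ℝ} (h1 : ∀ᶠ t in 𝓝 (0:ℝ), HasDerivAt φ (d t) t)
    (h2 : HasDerivAt d b 0) (hm : IsLocalMax φ 0) : b ≤ 0 := by
  by_contra! hb
  have hd : deriv φ =ᶠ[𝓝 0] d := by
    filter_upwards [h1] with t ht using ht.deriv
  have hdd : deriv (deriv φ) 0 = b := by
    rw [hd.deriv_eq, h2.deriv]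
  have hmin : IsLocalMin φ 0 := isLocalMin_of_deriv_deriv_pos (by rw [hdd]; exact hb)
    hm.deriv_eq_zero h1.self_of_nhds.continuousAt
  have hc : φ =ᶠ[𝓝 0] fun _ => φ 0 := by
    filter_upwards [hm, hmin] with t ht ht' using le_antisymm ht ht'
  have hc2 : deriv φ =ᶠ[𝓝 0] fun _ => 0 := by
    have := hc.deriv
    simpa using this
  have := hc2.deriv_eq
  simp [hdd] at this
  linarith

lemma HasLap.nonpos_of_max {N : ℕ} {s : Euc N → ℝ} {x : Euc N} {L : ℝ}
    (hs : HasLap N s x L) (hm : IsLocalMax s x) : L ≤ 0 := by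
  obtain ⟨d, b, h1, h2, rfl⟩ := hs
  refine Finset.sum_nonpos fun i _ => second_deriv_nonpos (h1 i) (h2 i) ?_
  have hc : Tendsto (fun t : ℝ => x + t • EuclideanSpace.single i (1 : ℝ)) (𝓝 0) (𝓝 x) := by
    simpa using (hasDerivAt_line x (EuclideanSpace.single i (1 : ℝ)) 0).continuousAt.tendsto
  have := hc.eventually hm
  filter_upwards [this] with t ht
  simpa using ht

/-- Comparison in the exterior of a ball. -/
lemma exterior_comparison {N : ℕ} {u s c Ls Lu : Euc N → ℝ} {R η : ℝ} (hη : 0 < η)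
    (huc : Continuous u) (hu0 : Tendsto u (cocompact (Euc N)) (𝓝 0))
    (hsc : ContinuousOn s {x | R ≤ ‖x‖}) (hs : ∀ x, R ≤ ‖x‖ → η ≤ s x)
    (hbd : ∀ x, ‖x‖ = R → u x ≤ s x)
    (hLu : ∀ x, R < ‖x‖ → HasLap N u x (Lu x))
    (hLs : ∀ x, R < ‖x‖ → HasLap N s x (Ls x))
    (hu : ∀ x, R < ‖x‖ → - Lu x ≤ c x * u x)
    (hss : ∀ x, R < ‖x‖ → c x * s x < - Ls x) :
    ∀ x, R ≤ ‖x‖ → u x ≤ s x := by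
  by_contra! hcon
  obtain ⟨x1, hx1, hx1'⟩ := hcon
  have hclosed : IsClosed {x : Euc N | R ≤ ‖x‖} := isClosed_le continuous_const continuous_norm
  have hgc : ContinuousOn (fun x => u x / s x) {x | R ≤ ‖x‖} :=
    huc.continuousOn.div hsc fun x hx => (hη.trans_le (hs x hx)).ne'
  have hs1 : 0 < s x1 := hη.trans_le (hs x1 hx1)
  have hg1 : 1 < u x1 / s x1 := by rwa [one_lt_div hs1]
  obtain ⟨x0, hx0, hmax⟩ := hgc.exists_isMaxOn' hclosed hx1 (by
    have h1 : ∀ᶠ x in cocompact (Euc N), u x < η := hu0.eventually_lt_const hη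
    rw [eventually_inf_principal]
    filter_upwards [h1] with x hx hxR
    have : u x / s x ≤ 1 := by
      rw [div_le_one (hη.trans_le (hs x hxR))]
      exact hx.le.trans (hs x hxR)
    linarith)
  have hx0' : R ≤ ‖x0‖ := hx0
  have hs0 : 0 < s x0 := hη.trans_le (hs x0 hx0)
  set T := u x0 / s x0 with hT
  have hT1 : 1 < T := hg1.trans_le (hmax hx1)
  have huT : u x0 = T * s x0 := by rw [hT]; field_simp
  have hlt : R < ‖x0‖ := by
    rcases hx0'.lt_or_eq with h | h
    · exact h
    · have := hbd x0 h.symm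
      nlinarith
  have hL := (hLu x0 hlt).add ((hLs x0 hlt).const_mul (-T))
  have hle := hL.nonpos_of_max (by
    have : ∀ᶠ x in 𝓝 x0, R < ‖x‖ := continuous_norm.continuousAt.eventually_const_lt hlt
    filter_upwards [this] with x hx
    have h2 : u x / s x ≤ T := hmax (show x ∈ {x | R ≤ ‖x‖} from hx.le)
    rw [div_le_iff₀ (hη.trans_le (hs x hx.le))] at h2
    rw [huT]
    linarith)
  have h3 := hu x0 hlt
  have h4 := hss x0 hlt
  rw [huT] at h3
  have : T * (c x0 * s x0) < T * (- Ls x0) := mul_lt_mul_of_pos_left h4 (by linarith)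
  nlinarith

/-- any solution of `(P_λ)` satisfies `u(x) ≤ C |x|^{2-N}`. -/
theorem stmt8 (N : ℕ) (hN : 3 ≤ N) (V V₁ V₂ : Euc N → ℝ)
    (hV : CondV N V V₁ V₂) (hdec : CondVDecay N V)
    (f : ℝ → ℝ) (hf : CondF N V f)
    (lam : ℝ) (hlam : 0 < lam)
    (u : Euc N → ℝ) (hu : IsSolution N V f lam u) :
    ∃ C : ℝ, 0 < C ∧ ∀ x : Euc N, x ≠ 0 → u x ≤ C * ‖x‖ ^ ((2 : ℝ) - N) := by
  obtain ⟨A, α, hA, hα, hVA⟩ := hdec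
  have hN3 : (3:ℝ) ≤ N := by exact_mod_cast hN
  have hucont : Continuous u := hu.smooth.continuous
  set δ : ℝ := min α 1 / 2 with hδ
  have hδ0 : 0 < δ := by positivity
  have hδα : δ < α := by have := min_le_left α 1; linarith
  have hδ1 : δ ≤ 1 / 2 := by have := min_le_right α 1; linarith
  set K : ℝ := lam * A / (α * (N - 2 + α)) with hK
  have hden : 0 < α * (N - 2 + α) := by
    apply mul_pos hα; linarith
  have hK0 : 0 < K := by positivity
  have hKe : K * (α * (N - 2 + α)) = lam * A := by rw [hK]; exact div_mul_cancel₀ _ hden.ne'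
  have hD : 0 < δ * (N - 2 - δ) := by
    apply mul_pos hδ0; linarith
  -- choice of R
  obtain ⟨R, hR1, hRK, hRδ⟩ : ∃ R : ℝ, 1 ≤ R ∧ (∀ r, R ≤ r → K * r ^ (-α) ≤ 1 / 2) ∧
      (∀ r, R ≤ r → 2 * (lam * A) * r ^ (-(α - δ)) < δ * (N - 2 - δ)) := by
    have t1 : Tendsto (fun r : ℝ => K * r ^ (-α)) atTop (𝓝 0) := by
      simpa using (tendsto_rpow_neg_atTop hα).const_mul K
    have t2 : Tendsto (fun r : ℝ => 2 * (lam * A) * r ^ (-(α - δ))) atTop (𝓝 0) := by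
      simpa using (tendsto_rpow_neg_atTop (sub_pos.mpr hδα)).const_mul (2 * (lam * A))
    obtain ⟨R1, h1⟩ := eventually_atTop.mp (t1.eventually_le_const (show (0:ℝ) < 1 / 2 by norm_num))
    obtain ⟨R2, h2⟩ := eventually_atTop.mp (t2.eventually_lt_const hD)
    refine ⟨max 1 (max R1 R2), le_max_left _ _, fun r hr => h1 r ?_, fun r hr => h2 r ?_⟩
    · exact ((le_max_left _ _).trans (le_max_right _ _)).trans hr
    · exact ((le_max_right _ _).trans (le_max_right _ _)).trans hr
  have hR0 : 0 < R := by linarith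
  obtain ⟨M, hM⟩ := (isCompact_closedBall (0 : Euc N) R).exists_bound_of_continuousOn
    hucont.continuousOn
  have hM' : ∀ x : Euc N, ‖x‖ ≤ R → u x ≤ M := fun x hx =>
    (le_abs_self _).trans (hM x (by simpa using hx))
  have hM0 : 0 < M := (hu.pos 0).trans_le (hM' 0 (by simpa using hR0.le))
  set C : ℝ := 2 * M * R ^ ((N:ℝ) - 2) with hC
  have hC0 : 0 < C := by positivity
  have hRR : R ^ ((N:ℝ) - 2) * R ^ ((2:ℝ) - N) = 1 := by
    rw [← Real.rpow_add hR0]; simp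
  refine ⟨C, hC0, fun x hx => ?_⟩
  have hr : 0 < ‖x‖ := norm_pos_iff.mpr hx
  rcases le_total ‖x‖ R with hxR | hxR
  · have h1 : R ^ ((2:ℝ) - N) ≤ ‖x‖ ^ ((2:ℝ) - N) :=
      Real.rpow_le_rpow_of_nonpos hr hxR (by linarith)
    calc u x ≤ M := hM' x hxR
      _ ≤ 2 * M * (R ^ ((N:ℝ) - 2) * R ^ ((2:ℝ) - N)) := by rw [hRR]; linarith
      _ = C * R ^ ((2:ℝ) - N) := by rw [hC]; ring
      _ ≤ _ := mul_le_mul_of_nonneg_left h1 hC0.le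
  -- exterior
  have key : ∀ η : ℝ, 0 < η → u x ≤ C * ‖x‖ ^ ((2:ℝ) - N) + 2 * η := by
    intro η hη
    have hw : ∀ r : ℝ, R ≤ r → r ^ ((2:ℝ) - N) / 2 ≤ r ^ ((2:ℝ) - N) - K * r ^ ((2:ℝ) - N - α) := by
      intro r hrR
      have hr0 : 0 < r := by linarith
      have e : r ^ ((2:ℝ) - N - α) = r ^ ((2:ℝ) - N) * r ^ (-α) := by
        rw [← Real.rpow_add hr0]; congr 1
      have hp : 0 < r ^ ((2:ℝ) - N) := by positivity
      have := hRK r hrR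
      rw [e]
      nlinarith
    have hz : ∀ r : ℝ, R ≤ r → r ^ (-δ) ≤ 1 := fun r hrR =>
      Real.rpow_le_one_of_one_le_of_nonpos (by linarith) (by linarith)
    have hcmp := exterior_comparison (N := N) (u := u)
      (s := fun y => C * (‖y‖ ^ ((2:ℝ) - N) + (-K) * ‖y‖ ^ ((2:ℝ) - N - α)) +
        η * (1 + ‖y‖ ^ (-δ)))
      (c := fun y => lam * A * ‖y‖ ^ (-2 - α))
      (Ls := fun y => C * (((2:ℝ) - N) * ((2:ℝ) - N - 2 + N) * ‖y‖ ^ ((2:ℝ) - N - 2) +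
        (-K) * (((2:ℝ) - N - α) * ((2:ℝ) - N - α - 2 + N) * ‖y‖ ^ ((2:ℝ) - N - α - 2))) +
        η * (0 + (-δ) * (-δ - 2 + N) * ‖y‖ ^ (-δ - 2)))
      (Lu := lap N u) (R := R) hη hucont hu.decay ?_ ?_ ?_ ?_ ?_ ?_ ?_ x hxR
    · have h1 : 0 ≤ C * (K * ‖x‖ ^ ((2:ℝ) - N - α)) := by positivity
      have h2 := mul_le_mul_of_nonneg_left (hz ‖x‖ hxR) hη.le
      linarith
    · have hcp : ∀ p : ℝ, ContinuousOn (fun y : Euc N => ‖y‖ ^ p) {y | R ≤ ‖y‖} := by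
        intro p
        refine continuous_norm.continuousOn.rpow_const fun y hy => Or.inl ?_
        have : R ≤ ‖y‖ := hy
        linarith
      exact (continuousOn_const.mul ((hcp _).add (continuousOn_const.mul (hcp _)))).add
        (continuousOn_const.mul (continuousOn_const.add (hcp _)))
    · intro y hy
      have h0 : 0 < ‖y‖ := by linarith
      have h1 := hw _ hy
      have h2 : 0 < ‖y‖ ^ ((2:ℝ) - N) := by positivity
      have h3 : 0 < ‖y‖ ^ (-δ) := by positivity
      have h4 : 0 ≤ C * (‖y‖ ^ ((2:ℝ) - N) + (-K) * ‖y‖ ^ ((2:ℝ) - N - α)) :=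
        mul_nonneg hC0.le (by linarith)
      have h5 := mul_pos hη h3
      linarith
    · intro y hy
      have h1 := hw ‖y‖ hy.ge
      have h3 : 0 < ‖y‖ ^ (-δ) := by rw [hy]; positivity
      have h5 := mul_pos hη h3
      have h6 := mul_le_mul_of_nonneg_left h1 hC0.le
      have h7 : C * (‖y‖ ^ ((2:ℝ) - N) / 2) = M := by
        rw [hy, hC]
        linear_combination M * hRR
      have := hM' y hy.le
      linarith
    · intro y _
      exact hasLap_of_contDiff hu.smooth y
    · intro y hy
      have hy0 : y ≠ 0 := norm_pos_iff.mp (by linarith)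
      exact (((hasLap_rpow _ hy0).add ((hasLap_rpow _ hy0).const_mul _)).const_mul _).add
        (((hasLap_const 1 y).add (hasLap_rpow _ hy0)).const_mul _)
    · intro y hy
      have hy0 : y ≠ 0 := norm_pos_iff.mp (by linarith)
      have hup := hu.pos y
      rw [hu.eqn y]
      have h1 : V y ≤ A * ‖y‖ ^ (-2 - α) := (le_max_left _ _).trans (hVA y hy0)
      have h2 : 0 ≤ f (u y) := hf.2.1 _ hup.le
      have h3 := mul_le_mul_of_nonneg_right h1 hup.le
      calc lam * (V y * u y - f (u y)) ≤ lam * (A * ‖y‖ ^ (-2 - α) * u y) :=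
            mul_le_mul_of_nonneg_left (by linarith) hlam.le
        _ = _ := by ring
    · intro y hy
      have h0 : 0 < ‖y‖ := by linarith
      set r := ‖y‖
      set P := r ^ (-2 - α) with hP
      have hPp : 0 < P := by positivity
      have e1 : r ^ ((2:ℝ) - N - α - 2) = P * r ^ ((2:ℝ) - N) := by
        rw [hP, ← Real.rpow_add h0]; congr 1; ring
      have e2 : r ^ (-2 - α) = r ^ (-δ - 2) * r ^ (-(α - δ)) := by
        rw [← Real.rpow_add h0]; congr 1; ring
      have hQ : 0 < r ^ (-δ - 2) := by positivity
      have h1 := mul_lt_mul_of_pos_left (hRδ r hy.le) hQ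
      have h2 := mul_le_mul_of_nonneg_left (hz r hy.le) (show 0 ≤ lam * A * P by positivity)
      have h3 : lam * A * P * (1 + r ^ (-δ)) < δ * (N - 2 - δ) * r ^ (-δ - 2) := by
        have : 2 * (lam * A) * P = r ^ (-δ - 2) * (2 * (lam * A) * r ^ (-(α - δ))) := by
          rw [hP, e2]; ring
        linarith
      have h4 := mul_lt_mul_of_pos_left h3 hη
      have h5 : 0 ≤ lam * A * P * C * (K * r ^ ((2:ℝ) - N - α)) := by positivity
      rw [e1]
      have h6 : -(C * ((2 - (N:ℝ)) * (2 - N - 2 + N) * r ^ ((2:ℝ) - N - 2) +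
          -K * ((2 - N - α) * (2 - N - α - 2 + N) * (P * r ^ ((2:ℝ) - N)))) +
          η * (0 + -δ * (-δ - 2 + N) * r ^ (-δ - 2)))
          = lam * A * P * C * r ^ ((2:ℝ) - N) + η * (δ * (N - 2 - δ) * r ^ (-δ - 2)) := by
        rw [← hKe]; ring
      rw [h6]
      linarith
  refine le_of_forall_pos_le_add fun ε hε => ?_
  have := key (ε / 2) (by positivity)
  linarith

end
end

section
/- Let N ≥ 3, let V satisfy condition (V) and the decay condition that there exist A, α > 0 with V⁺(x) ≤ A|x|^{-2-α} for all x ∈ ℝ^N, let f satisfy conditions (f1), (f2), (f3), let λ > 0, and let u be a solution of problem (P_λ). Then the functions x ↦ V⁺(x)u(x), x ↦ V⁻(x)u(x) and x ↦ f(u(x)) are all integrable on ℝ^N (belong to L¹(ℝ^N)). -/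
open MeasureTheory Filter Metric Set
open scoped ENNReal NNReal Topology

noncomputable section

lemma lap_eq_laplacian {N : ℕ} {h : Euc N → ℝ} {x : Euc N} (hh : ContDiffAt ℝ 2 h x) :
    lap N h x = Laplacian.laplacian h x := by
  rw [InnerProductSpace.laplacian_eq_iteratedFDeriv_orthonormalBasis h
    (EuclideanSpace.basisFun (Fin N) ℝ)]
  have hd : DifferentiableAt ℝ (fderiv ℝ h) x :=
    (hh.fderiv_right (m := 1) (by norm_num)).differentiableAt (by norm_num)
  simp only [lap, iteratedFDeriv_two_apply]
  refine Finset.sum_congr rfl fun i _ => ?_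
  rw [fderiv_clm_apply hd (differentiableAt_const _)]
  simp

lemma lap_comb {N : ℕ} {a b c : Euc N → ℝ} {x : Euc N} (C m : ℝ) (ha : ContDiffAt ℝ 2 a x)
    (hb : ContDiffAt ℝ 2 b x) (hc : ContDiffAt ℝ 2 c x) :
    lap N (fun y => a y - C * b y - m * c y) x = lap N a x - C * lap N b x - m * lap N c x := by
  have hb' : ContDiffAt ℝ 2 (C • b) x := contDiffAt_const.smul hb
  have hc' : ContDiffAt ℝ 2 (m • c) x := contDiffAt_const.smul hc
  have e : (fun y => a y - C * b y - m * c y) = a - C • b - m • c := by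
    ext y; simp
  have hs : ContDiffAt ℝ 2 (a - C • b) x := ha.sub hb'
  have hs2 : ContDiffAt ℝ 2 (a - C • b - m • c) x := hs.sub hc'
  rw [e, lap_eq_laplacian hs2, lap_eq_laplacian ha, lap_eq_laplacian hb,
    lap_eq_laplacian hc, hs.laplacian_sub hc', ha.laplacian_sub hb',
    InnerProductSpace.laplacian_smul C hb, InnerProductSpace.laplacian_smul m hc]
  simp

lemma lap_nonpos_of_isLocalMax {N : ℕ} {h : Euc N → ℝ} {x : Euc N} (hh : ContDiffAt ℝ 2 h x)
    (hm : IsLocalMax h x) : lap N h x ≤ 0 := by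
  unfold lap
  refine Finset.sum_nonpos fun i _ => ?_
  set e : Euc N := EuclideanSpace.single i 1
  by_contra! hpos
  set l : ℝ → Euc N := fun t => x + t • e with hl
  have hl0 : l 0 = x := by simp [hl]
  have hld : ∀ t, HasDerivAt l e t := fun t => by
    have := ((hasDerivAt_id t).smul_const e).const_add x
    rw [one_smul] at this
    exact this
  have hlc : ContinuousAt l 0 := (hld 0).continuousAt
  have hlt : Tendsto l (𝓝 0) (𝓝 x) := by
    have := hlc.tendsto; rwa [hl0] at this
  have hev : ∀ᶠ y in 𝓝 x, DifferentiableAt ℝ h y := by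
    filter_upwards [hh.eventually (by simp)] with y hy using hy.differentiableAt (by norm_num)
  have hder : deriv (fun t => h (l t)) =ᶠ[𝓝 0] fun t => fderiv ℝ h (l t) e := by
    filter_upwards [hlt.eventually hev] with t ht
    exact (ht.hasFDerivAt.comp_hasDerivAt t (hld t)).deriv
  have hd2 : DifferentiableAt ℝ (fun y => fderiv ℝ h y e) (l 0) := by
    rw [hl0]
    exact ((hh.fderiv_right (m := 1) (by norm_num)).differentiableAt (by norm_num)).clm_apply
      (differentiableAt_const _)
  have hdd : deriv (deriv (fun t => h (l t))) 0 = fderiv ℝ (fun y => fderiv ℝ h y e) x e := by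
    rw [hder.deriv_eq]
    have := (hd2.hasFDerivAt.comp_hasDerivAt 0 (hld 0)).deriv
    rw [hl0] at this
    exact this
  have hmax : IsLocalMax (fun t => h (l t)) 0 := by
    have := hlt.eventually hm
    simpa [IsLocalMax, IsMaxFilter, hl0] using this
  have hmin : IsLocalMin (fun t => h (l t)) 0 := by
    refine isLocalMin_of_deriv_deriv_pos (by rw [hdd]; exact hpos) hmax.deriv_eq_zero ?_
    have : ContinuousAt h (l 0) := by rw [hl0]; exact hh.continuousAt
    exact ContinuousAt.comp (f := l) this hlc
  have hconst : (fun t => h (l t)) =ᶠ[𝓝 0] fun _ => h x := by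
    filter_upwards [hmax, hmin] with t h1 h2
    simp only [hl0] at h1 h2
    exact le_antisymm h1 h2
  have h0 : deriv (deriv (fun t => h (l t))) 0 = 0 := by
    rw [hconst.deriv.deriv_eq]; simp
  rw [hdd] at h0
  linarith

lemma contDiffAt_pw {N : ℕ} (s : ℝ) {x : Euc N} (hx : x ≠ 0) :
    ContDiffAt ℝ 2 (fun y : Euc N => (‖y‖ ^ 2) ^ s) x := by
  refine ContDiffAt.rpow_const_of_ne ?_ (by positivity)
  exact (contDiff_norm_sq ℝ).contDiffAt

lemma fderiv_pw {N : ℕ} (s : ℝ) {x : Euc N} (hx : x ≠ 0) (i : Fin N) :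
    fderiv ℝ (fun y : Euc N => (‖y‖ ^ 2) ^ s) x (EuclideanSpace.single i 1)
      = 2 * s * (x i * (‖x‖ ^ 2) ^ (s - 1)) := by
  have h1 : HasFDerivAt (fun y : Euc N => ‖y‖ ^ 2) (2 • (innerSL ℝ x)) x := by
    exact (hasStrictFDerivAt_norm_sq x).hasFDerivAt
  have h2 := h1.rpow_const (p := s) (Or.inl (by positivity))
  rw [h2.fderiv]
  simp [EuclideanSpace.inner_single_right]
  ring

lemma lap_pw {N : ℕ} (s : ℝ) {x : Euc N} (hx : x ≠ 0) :
    lap N (fun y : Euc N => (‖y‖ ^ 2) ^ s) x = 2 * s * (N + 2 * s - 2) * (‖x‖ ^ 2) ^ (s - 1) := by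
  have hq : 0 < ‖x‖ ^ 2 := by positivity
  have key : ∀ i : Fin N, fderiv ℝ (fun y => fderiv ℝ (fun y : Euc N => (‖y‖ ^ 2) ^ s) y
      (EuclideanSpace.single i 1)) x (EuclideanSpace.single i 1)
      = 2 * s * ((‖x‖ ^ 2) ^ (s - 1) + x i ^ 2 * (2 * (s - 1) * (‖x‖ ^ 2) ^ (s - 2))) := by
    intro i
    have he : (fun y => fderiv ℝ (fun y : Euc N => (‖y‖ ^ 2) ^ s) y
      (EuclideanSpace.single i 1)) =ᶠ[𝓝 x] fun y => 2 * s * (y i * (‖y‖ ^ 2) ^ (s - 1)) := by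
      filter_upwards [isOpen_ne.mem_nhds hx] with y hy using fderiv_pw s hy i
    rw [he.fderiv_eq]
    have hp : HasFDerivAt (fun y : Euc N => (‖y‖ ^ 2) ^ (s - 1)) _ x :=
      ((contDiffAt_pw (s - 1) hx).differentiableAt (by norm_num)).hasFDerivAt
    have hc : HasFDerivAt (fun y : Euc N => y i) (EuclideanSpace.proj i : Euc N →L[ℝ] ℝ) x :=
      (EuclideanSpace.proj i : Euc N →L[ℝ] ℝ).hasFDerivAt
    have hall : HasFDerivAt (fun y : Euc N => 2 * s * (y i * (‖y‖ ^ 2) ^ (s - 1))) _ x :=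
      (hc.mul hp).const_mul (2 * s)
    rw [hall.fderiv]
    have := fderiv_pw (s - 1) hx i
    rw [show s - 1 - 1 = s - 2 by ring] at this
    simp only [smul_apply, add_apply, this, smul_eq_mul]
    have hpr : (EuclideanSpace.proj i : Euc N →L[ℝ] ℝ) (EuclideanSpace.single i 1) = 1 := by simp
    rw [hpr]
    ring
  unfold lap
  rw [Finset.sum_congr rfl fun i _ => key i, ← Finset.mul_sum, Finset.sum_add_distrib,
    ← Finset.sum_mul, ← EuclideanSpace.real_norm_sq_eq]
  have : (‖x‖ ^ 2) ^ (s - 1) = ‖x‖ ^ 2 * (‖x‖ ^ 2) ^ (s - 2) := by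
    rw [show s - 1 = 1 + (s - 2) by ring, Real.rpow_add hq, Real.rpow_one]
  simp only [Finset.sum_const, Finset.card_univ, Fintype.card_fin, nsmul_eq_mul]
  rw [this]
  ring

lemma comparison {N : ℕ} {u w w2 k : Euc N → ℝ} {R : ℝ} (hR : 0 < R) (C : ℝ) (hC : 0 ≤ C)
    (hu : ContDiff ℝ 2 u)
    (hw : ∀ x : Euc N, x ≠ 0 → ContDiffAt ℝ 2 w x) (hw2 : ∀ x : Euc N, x ≠ 0 → ContDiffAt ℝ 2 w2 x)
    (hu0 : Tendsto u (cocompact _) (𝓝 0)) (hw0 : ∀ x : Euc N, R ≤ ‖x‖ → 0 ≤ w x)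
    (hw21 : ∀ x : Euc N, x ≠ 0 → 1 ≤ w2 x)
    (hul : ∀ x : Euc N, R < ‖x‖ → - lap N u x ≤ k x * u x)
    (hwl : ∀ x : Euc N, R < ‖x‖ → k x * w x ≤ - lap N w x)
    (hw2l : ∀ x : Euc N, R < ‖x‖ → k x * w2 x < - lap N w2 x)
    (hb : ∀ x : Euc N, ‖x‖ = R → u x ≤ C * w x) :
    ∀ x : Euc N, R ≤ ‖x‖ → u x ≤ C * w x := by
  intro x1 hx1
  by_contra! hlt
  have hne : ∀ x : Euc N, R ≤ ‖x‖ → x ≠ 0 := fun x hx h0 => by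
    rw [h0, norm_zero] at hx; linarith
  set z : Euc N → ℝ := fun x => (u x - C * w x) / w2 x with hz
  have hz1 : 0 < z x1 := div_pos (by linarith) (by linarith [hw21 x1 (hne x1 hx1)])
  -- compact region
  have hev : ∀ᶠ x in cocompact (Euc N), u x < z x1 := hu0.eventually (gt_mem_nhds hz1)
  obtain ⟨K, hK, hKs⟩ := (hasBasis_cocompact.eventually_iff).1 hev
  set S : Set (Euc N) := {x | R ≤ ‖x‖} with hS
  have hScl : IsClosed S := isClosed_le continuous_const continuous_norm
  have hout : ∀ x ∈ S, x ∉ K → z x < z x1 := by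
    intro x hx hxK
    have h1 : u x < z x1 := hKs hxK
    have h2 := hw21 x (hne x hx)
    rw [hz]
    simp only
    rw [div_lt_iff₀ (by linarith)]
    have := mul_nonneg hC (hw0 x hx)
    nlinarith
  have hx1K : x1 ∈ S ∩ K := ⟨hx1, by
    by_contra h; exact lt_irrefl _ (hout x1 hx1 h)⟩
  have hcont : ContinuousOn z (S ∩ K) := fun x hx => by
    have h0 := hne x hx.1
    refine ContinuousAt.continuousWithinAt ?_
    exact ((hu.continuous.continuousAt).sub (continuousAt_const.mul (hw x h0).continuousAt)).div
      (hw2 x h0).continuousAt (by linarith [hw21 x h0])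
  obtain ⟨x0, hx0, hmax⟩ := (hK.inter_left hScl).exists_isMaxOn ⟨x1, hx1K⟩ hcont
  have hm1 : z x1 ≤ z x0 := hmax hx1K
  have hall : ∀ x ∈ S, z x ≤ z x0 := fun x hx => by
    by_cases hxK : x ∈ K
    · exact hmax ⟨hx, hxK⟩
    · exact (hout x hx hxK).le.trans hm1
  have hx0S : R ≤ ‖x0‖ := hx0.1
  have hx0R : R < ‖x0‖ := by
    rcases hx0S.lt_or_eq with h | h
    · exact h
    · exfalso
      have h1 := hb x0 h.symm
      have : z x0 ≤ 0 := div_nonpos_of_nonpos_of_nonneg (by linarith)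
        (by linarith [hw21 x0 (hne x0 hx0S)])
      linarith
  have h0 := hne x0 hx0S
  set m := z x0 with hm
  have hmpos : 0 < m := by linarith
  have heq : u x0 - C * w x0 - m * w2 x0 = 0 := by
    have := hw21 x0 h0
    rw [hm, hz]; simp only
    rw [div_mul_cancel₀ _ (by linarith)]; ring
  have hloc : IsLocalMax (fun y => u y - C * w y - m * w2 y) x0 := by
    filter_upwards [(isOpen_lt continuous_const continuous_norm).mem_nhds hx0R] with y hy
    have hy' : R ≤ ‖y‖ := le_of_lt hy
    have h1 := hall y hy'
    have h2 := hw21 y (hne y hy')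
    simp only [hz] at h1
    rw [div_le_iff₀ (by linarith)] at h1
    rw [heq]; linarith
  have hcd : ContDiffAt ℝ 2 (fun y => u y - C * w y - m * w2 y) x0 :=
    ((hu.contDiffAt).sub (contDiffAt_const.mul (hw x0 h0))).sub (contDiffAt_const.mul (hw2 x0 h0))
  have hle := lap_nonpos_of_isLocalMax hcd hloc
  rw [lap_comb C m hu.contDiffAt (hw x0 h0) (hw2 x0 h0)] at hle
  have e1 := hul x0 hx0R
  have e2 := mul_le_mul_of_nonneg_left (hwl x0 hx0R) hC
  have e3 := mul_lt_mul_of_pos_left (hw2l x0 hx0R) hmpos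
  have e4 : k x0 * (u x0 - C * w x0 - m * w2 x0) = 0 := by rw [heq, mul_zero]
  nlinarith

lemma decay_bound {N : ℕ} (hN : 3 ≤ N) {V u : Euc N → ℝ} (hdec : CondVDecay N V)
    {lam : ℝ} (hlam : 0 < lam) (hu : ContDiff ℝ 2 u) (hpos : ∀ x, 0 < u x)
    (hu0 : Tendsto u (cocompact _) (𝓝 0))
    (hsub : ∀ x, - lap N u x ≤ lam * (max (V x) 0 * u x)) :
    ∃ C R : ℝ, 0 ≤ C ∧ 1 ≤ R ∧
      ∀ x : Euc N, R ≤ ‖x‖ → u x ≤ C * (‖x‖ ^ 2) ^ (-((N : ℝ) - 2) / 2) := by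
  obtain ⟨A, α, hA, hα, hVA⟩ := hdec
  have hN' : (3 : ℝ) ≤ N := by exact_mod_cast hN
  obtain ⟨n, hn⟩ : ∃ n : ℝ, n = (N : ℝ) - 2 := ⟨_, rfl⟩
  have hn1 : 1 ≤ n := by linarith
  rw [← hn]
  obtain ⟨γ, hγ0, hγα, hγ1⟩ : ∃ γ : ℝ, 0 < γ ∧ γ ≤ α / 4 ∧ γ ≤ 1 / 4 :=
    ⟨min (α / 4) (1 / 4), by positivity, min_le_left _ _, min_le_right _ _⟩
  have hc1 : 0 < α / 2 * (n + α / 2) := by positivity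
  have hc2 : 0 < 2 * γ * (n - 2 * γ) := by
    have : 0 < n - 2 * γ := by linarith
    positivity
  obtain ⟨Q, hQ⟩ : ∃ Q : ℝ, ∀ q, Q ≤ q → lam * A * q ^ (-(α / 4)) < α / 2 * (n + α / 2) ∧
      2 * (lam * A * q ^ (-(α / 4))) < 2 * γ * (n - 2 * γ) := by
    have ht : Tendsto (fun q : ℝ => lam * A * q ^ (-(α / 4))) atTop (𝓝 0) := by
      simpa using (tendsto_rpow_neg_atTop (show 0 < α / 4 by positivity)).const_mul (lam * A)
    have ht2 : Tendsto (fun q : ℝ => 2 * (lam * A * q ^ (-(α / 4)))) atTop (𝓝 0) := by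
      simpa using ht.const_mul 2
    exact eventually_atTop.1 ((ht.eventually (gt_mem_nhds hc1)).and
      (ht2.eventually (gt_mem_nhds hc2)))
  obtain ⟨R, hR2, hRQ⟩ : ∃ R : ℝ, 2 ≤ R ∧ Q ≤ R := ⟨max 2 Q, le_max_left _ _, le_max_right _ _⟩
  have hRpos : 0 < R := by linarith
  obtain ⟨M, hM⟩ : ∃ M, ∀ x ∈ sphere (0 : Euc N) R, u x ≤ M := by
    obtain ⟨M, hM⟩ := (isCompact_sphere (0 : Euc N) R).bddAbove_image hu.continuous.continuousOn
    exact ⟨M, fun x hx => hM ⟨x, hx, rfl⟩⟩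
  set w : Euc N → ℝ := fun y => (‖y‖ ^ 2) ^ (-n / 2) - (‖y‖ ^ 2) ^ (-n / 2 - α / 4) with hw
  have hqgt : ∀ x : Euc N, R ≤ ‖x‖ → 1 < ‖x‖ ^ 2 ∧ Q ≤ ‖x‖ ^ 2 := fun x hx => by
    constructor <;> nlinarith
  have hwpos : ∀ x : Euc N, R ≤ ‖x‖ → 0 < w x := fun x hx => by
    have := Real.rpow_lt_rpow_of_exponent_lt (hqgt x hx).1
      (show -n / 2 - α / 4 < -n / 2 by linarith)
    simp only [hw]; linarith
  set wR : ℝ := (R ^ 2) ^ (-n / 2) - (R ^ 2) ^ (-n / 2 - α / 4) with hwR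
  have hwRpos : 0 < wR := by
    have := Real.rpow_lt_rpow_of_exponent_lt (show 1 < R ^ 2 by nlinarith)
      (show -n / 2 - α / 4 < -n / 2 by linarith)
    simp only [hwR]; linarith
  set C := max M 0 / wR with hC
  have hC0 : 0 ≤ C := by positivity
  have hlapw : ∀ x : Euc N, x ≠ 0 → lap N w x
      = - (α / 2 * (n + α / 2) * (‖x‖ ^ 2) ^ (-n / 2 - α / 4 - 1)) := by
    intro x hx
    have := lap_comb (N := N) (x := x) 1 0 (contDiffAt_pw (-n / 2) hx)
      (contDiffAt_pw (-n / 2 - α / 4) hx) (contDiffAt_const (c := (0:ℝ)))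
    simp only [one_mul, zero_mul, sub_zero] at this
    rw [hw, this, lap_pw _ hx, lap_pw _ hx]
    rw [show (N : ℝ) = n + 2 by linarith]
    ring
  have hlapw2 : ∀ x : Euc N, x ≠ 0 → lap N (fun y => 1 + (‖y‖ ^ 2) ^ (-γ)) x
      = - (2 * γ * (n - 2 * γ) * (‖x‖ ^ 2) ^ (-γ - 1)) := by
    intro x hx
    have := lap_comb (N := N) (x := x) (-1) 0 (contDiffAt_const (c := (1:ℝ)))
      (contDiffAt_pw (-γ) hx) (contDiffAt_const (c := (0:ℝ)))
    simp only [neg_mul, one_mul, zero_mul, sub_zero, sub_neg_eq_add] at this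
    rw [this, lap_pw _ hx]
    have h0 : lap N (fun _ : Euc N => (1 : ℝ)) x = 0 := by simp [lap]
    rw [h0, show (N : ℝ) = n + 2 by linarith]
    ring
  have hne : ∀ x : Euc N, R ≤ ‖x‖ → x ≠ 0 := fun x hx h0 => by
    rw [h0, norm_zero] at hx; linarith
  have hcomp := comparison (N := N) (u := u) (w := w) (w2 := fun y => 1 + (‖y‖ ^ 2) ^ (-γ))
    (k := fun y => lam * A * (‖y‖ ^ 2) ^ (-1 - α / 2)) hRpos C hC0 hu
    (fun x hx => (contDiffAt_pw _ hx).sub (contDiffAt_pw _ hx))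
    (fun x hx => contDiffAt_const.add (contDiffAt_pw _ hx)) hu0
    (fun x hx => (hwpos x hx).le)
    (fun x hx => by
      have : 0 ≤ (‖x‖ ^ 2) ^ (-γ) := by positivity
      linarith)
    (fun x hx => by
      have h0 := hne x hx.le
      refine (hsub x).trans ?_
      have h1 := hVA x h0
      have h2 : ‖x‖ ^ (-2 - α) = (‖x‖ ^ 2) ^ (-1 - α / 2) := by
        rw [← Real.rpow_natCast, ← Real.rpow_mul (norm_nonneg _)]
        congr 1; push_cast; ring
      rw [h2] at h1
      have := mul_le_mul_of_nonneg_left (mul_le_mul_of_nonneg_right h1 (hpos x).le) hlam.le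
      linarith)
    (fun x hx => by
      have h0 := hne x hx.le
      rw [hlapw x h0, neg_neg]
      obtain ⟨hq1, hqQ⟩ := hqgt x hx.le
      have hq0 : 0 < ‖x‖ ^ 2 := by linarith
      have e1 := (hQ _ hqQ).1
      have hp : (‖x‖ ^ 2) ^ (-1 - α / 2) * (‖x‖ ^ 2) ^ (-n / 2)
          = (‖x‖ ^ 2) ^ (-(α / 4)) * (‖x‖ ^ 2) ^ (-n / 2 - α / 4 - 1) := by
        rw [← Real.rpow_add hq0, ← Real.rpow_add hq0]; congr 1; ring
      have hw' : w x ≤ (‖x‖ ^ 2) ^ (-n / 2) := by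
        have : 0 ≤ (‖x‖ ^ 2) ^ (-n / 2 - α / 4) := by positivity
        simp only [hw]; linarith
      calc lam * A * (‖x‖ ^ 2) ^ (-1 - α / 2) * w x
          ≤ lam * A * (‖x‖ ^ 2) ^ (-1 - α / 2) * (‖x‖ ^ 2) ^ (-n / 2) := by gcongr
        _ = lam * A * (‖x‖ ^ 2) ^ (-(α / 4)) * (‖x‖ ^ 2) ^ (-n / 2 - α / 4 - 1) := by
            rw [mul_assoc, hp, ← mul_assoc]
        _ ≤ _ := by gcongr)
    (fun x hx => by
      have h0 := hne x hx.le
      rw [hlapw2 x h0, neg_neg]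
      obtain ⟨hq1, hqQ⟩ := hqgt x hx.le
      have hq0 : 0 < ‖x‖ ^ 2 := by linarith
      have e1 := (hQ _ hqQ).2
      have hp : (‖x‖ ^ 2) ^ (-1 - α / 2) ≤ (‖x‖ ^ 2) ^ (-(α / 4)) * (‖x‖ ^ 2) ^ (-γ - 1) := by
        rw [← Real.rpow_add hq0]
        exact Real.rpow_le_rpow_of_exponent_le hq1.le (by linarith)
      have hg : (‖x‖ ^ 2) ^ (-γ) ≤ 1 := Real.rpow_le_one_of_one_le_of_nonpos hq1.le (by linarith)
      have hg' : 0 < (‖x‖ ^ 2) ^ (-γ - 1) := by positivity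
      calc lam * A * (‖x‖ ^ 2) ^ (-1 - α / 2) * (1 + (‖x‖ ^ 2) ^ (-γ))
          ≤ lam * A * ((‖x‖ ^ 2) ^ (-(α / 4)) * (‖x‖ ^ 2) ^ (-γ - 1)) * 2 := by
            gcongr; linarith
        _ = 2 * (lam * A * (‖x‖ ^ 2) ^ (-(α / 4))) * (‖x‖ ^ 2) ^ (-γ - 1) := by ring
        _ < _ := by gcongr)
    (fun x hx => by
      have h1 := hM x (by simpa using hx)
      have : w x = wR := by simp only [hw, hwR, hx]
      rw [this, hC, div_mul_cancel₀ _ hwRpos.ne']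
      exact h1.trans (le_max_left _ _))
  refine ⟨C, R, hC0, by linarith, fun x hx => (hcomp x hx).trans ?_⟩
  have : 0 ≤ (‖x‖ ^ 2) ^ (-n / 2 - α / 4) := by positivity
  refine mul_le_mul_of_nonneg_left ?_ hC0
  simp only [hw]; linarith

lemma integrable_Vplus {N : ℕ} {V u : Euc N → ℝ} (hV : Continuous V)
    (hdec : CondVDecay N V) (hu : Continuous u) (hpos : ∀ x, 0 < u x) {C R : ℝ} (hC : 0 ≤ C)
    (hR : 1 ≤ R) (hb : ∀ x : Euc N, R ≤ ‖x‖ → u x ≤ C * (‖x‖ ^ 2) ^ (-((N : ℝ) - 2) / 2)) :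
    Integrable (fun x : Euc N => max (V x) 0 * u x) := by
  obtain ⟨A, α, hA, hα, hVA⟩ := hdec
  have hcont : Continuous (fun x : Euc N => max (V x) 0 * u x) := by fun_prop
  have hg : Integrable (fun x : Euc N => (A * C * 2 ^ ((N : ℝ) + α)) *
      (1 + ‖x‖) ^ (-((N : ℝ) + α))) :=
    (integrable_one_add_norm (by simp; exact hα)).const_mul _
  have h1 : IntegrableOn (fun x : Euc N => max (V x) 0 * u x) (closedBall 0 R) :=
    hcont.continuousOn.integrableOn_compact (isCompact_closedBall _ _)
  have h2 : IntegrableOn (fun x : Euc N => max (V x) 0 * u x) (closedBall 0 R)ᶜ := by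
    refine Integrable.mono' hg.integrableOn hcont.aestronglyMeasurable ?_
    refine (ae_restrict_iff' isClosed_closedBall.measurableSet.compl).2 (ae_of_all _ ?_)
    intro x hx
    have hxR : R < ‖x‖ := by simpa using hx
    have hx1 : 1 ≤ ‖x‖ := by linarith
    have hx0 : x ≠ 0 := by rintro rfl; simp at hx1; linarith
    have hxp : 0 < ‖x‖ := by linarith
    have hV0 : 0 ≤ max (V x) 0 := le_max_right _ _
    rw [Real.norm_of_nonneg (mul_nonneg hV0 (hpos x).le)]
    have e1 : (‖x‖ ^ 2) ^ (-((N : ℝ) - 2) / 2) = ‖x‖ ^ (-((N : ℝ) - 2)) := by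
      rw [← Real.rpow_natCast, ← Real.rpow_mul (norm_nonneg _)]
      congr 1; push_cast; ring
    calc max (V x) 0 * u x ≤ (A * ‖x‖ ^ (-2 - α)) * (C * (‖x‖ ^ 2) ^ (-((N : ℝ) - 2) / 2)) :=
          mul_le_mul (hVA x hx0) (hb x hxR.le) (hpos x).le (by positivity)
      _ = A * C * ‖x‖ ^ (-((N : ℝ) + α)) := by
          rw [e1, show -((N : ℝ) + α) = (-2 - α) + -((N : ℝ) - 2) by ring, Real.rpow_add hxp]; ring
      _ ≤ A * C * ((1 + ‖x‖) / 2) ^ (-((N : ℝ) + α)) := by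
          refine mul_le_mul_of_nonneg_left ?_ (by positivity)
          exact Real.rpow_le_rpow_of_nonpos (by positivity) (by linarith)
            (by have : (0:ℝ) ≤ N := by positivity
                linarith)
      _ = A * C * 2 ^ ((N : ℝ) + α) * (1 + ‖x‖) ^ (-((N : ℝ) + α)) := by
          rw [Real.div_rpow (by positivity) (by positivity), Real.rpow_neg (by norm_num : (0:ℝ) ≤ 2)]
          rw [div_inv_eq_mul]; ring
  have := h1.union h2
  rwa [union_compl_self, integrableOn_univ] at this

lemma ibp_one {N : ℕ} {u φ : Euc N → ℝ} (hu : ContDiff ℝ 1 u) (hφ : ContDiff ℝ 1 φ)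
    (hs : HasCompactSupport φ) (v : Euc N) :
    ∫ x, φ x * fderiv ℝ u x v = - ∫ x, fderiv ℝ φ x v * u x := by
  have hφ' : Continuous fun x => fderiv ℝ φ x v :=
    (hφ.continuous_fderiv (by norm_num)).clm_apply continuous_const
  have hu' : Continuous fun x => fderiv ℝ u x v :=
    (hu.continuous_fderiv (by norm_num)).clm_apply continuous_const
  refine integral_mul_fderiv_eq_neg_fderiv_mul_of_integrable ?_ ?_ ?_
    (fun x _ => hφ.differentiable (by norm_num) x) (fun x _ => hu.differentiable (by norm_num) x)
  · exact (hφ'.mul hu.continuous).integrable_of_hasCompactSupport (hs.fderiv_apply ℝ v).mul_right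
  · exact (hφ.continuous.mul hu').integrable_of_hasCompactSupport hs.mul_right
  · exact (hφ.continuous.mul hu.continuous).integrable_of_hasCompactSupport hs.mul_right

lemma contDiff_d {N : ℕ} {u : Euc N → ℝ} (hu : ContDiff ℝ 2 u) (v : Euc N) :
    ContDiff ℝ 1 (fun y => fderiv ℝ u y v) :=
  (hu.fderiv_right (m := 1) (by norm_num)).clm_apply contDiff_const

lemma continuous_dd {N : ℕ} {u : Euc N → ℝ} (hu : ContDiff ℝ 2 u) (v : Euc N) :
    Continuous (fun x => fderiv ℝ (fun y => fderiv ℝ u y v) x v) :=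
  ((contDiff_d hu v).continuous_fderiv (by norm_num)).clm_apply continuous_const

lemma continuous_lap {N : ℕ} {u : Euc N → ℝ} (hu : ContDiff ℝ 2 u) : Continuous (lap N u) := by
  unfold lap
  exact continuous_finsetSum _ fun i _ => continuous_dd hu _

lemma ibp_lap {N : ℕ} {u φ : Euc N → ℝ} (hu : ContDiff ℝ 2 u) (hφ : ContDiff ℝ 2 φ)
    (hs : HasCompactSupport φ) :
    ∫ x, φ x * lap N u x = ∫ x, lap N φ x * u x := by
  unfold lap
  simp only [Finset.mul_sum, Finset.sum_mul]
  rw [integral_finsetSum, integral_finsetSum]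
  · refine Finset.sum_congr rfl fun i _ => ?_
    set e : Euc N := EuclideanSpace.single i 1
    have h1 := ibp_one (contDiff_d hu e) (hφ.of_le (by norm_num)) hs e
    have h2 := ibp_one (hu.of_le (by norm_num)) (contDiff_d hφ e) (hs.fderiv_apply ℝ e) e
    rw [h1, h2, neg_neg]
  · intro i _
    exact ((continuous_dd hφ _).mul hu.continuous).integrable_of_hasCompactSupport
      (((hs.fderiv_apply ℝ _).fderiv_apply ℝ _).mul_right)
  · intro i _
    exact (hφ.continuous.mul (continuous_dd hu _)).integrable_of_hasCompactSupport hs.mul_right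

lemma lap_zero_of_eventuallyEq {N : ℕ} {φ : Euc N → ℝ} {x : Euc N} {c : ℝ}
    (h : φ =ᶠ[𝓝 x] fun _ => c) : lap N φ x = 0 := by
  unfold lap
  refine Finset.sum_eq_zero fun i _ => ?_
  have : (fun y => fderiv ℝ φ y (EuclideanSpace.single i 1)) =ᶠ[𝓝 x] fun _ => (0 : ℝ) := by
    filter_upwards [h.fderiv (𝕜 := ℝ)] with y hy
    rw [hy]; simp
  rw [this.fderiv_eq]; simp

lemma lap_scale {N : ℕ} (φ : Euc N → ℝ) (c : ℝ) (x : Euc N) :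
    lap N (fun y => φ (c • y)) x = c ^ 2 * lap N φ (c • x) := by
  unfold lap
  rw [Finset.mul_sum]
  refine Finset.sum_congr rfl fun i _ => ?_
  have : (fun y => fderiv ℝ (fun y => φ (c • y)) y (EuclideanSpace.single i 1))
      = fun y => (c • fun y => (fun z => fderiv ℝ φ z (EuclideanSpace.single i 1)) (c • y)) y := by
    ext y
    rw [fderiv_comp_smul]; simp
  rw [this]
  rcases eq_or_ne c 0 with rfl | hc
  · simp
  change fderiv ℝ (c • fun y => (fun z => fderiv ℝ φ z (EuclideanSpace.single i 1)) (c • y)) x _ = _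
  rw [fderiv_const_smul_field, Pi.smul_apply,
    fderiv_comp_smul (f := fun z => fderiv ℝ φ z (EuclideanSpace.single i 1)) c]
  simp
  ring

lemma cutoff {N : ℕ} : ∃ K : ℝ, 0 ≤ K ∧ ∀ R : ℝ, 0 < R → ∃ φ : Euc N → ℝ, ContDiff ℝ 2 φ ∧
    HasCompactSupport φ ∧ (∀ x, 0 ≤ φ x) ∧ (∀ x, φ x ≤ 1) ∧ (∀ x, ‖x‖ ≤ R → φ x = 1) ∧
    (∀ x, ‖x‖ < R → lap N φ x = 0) ∧ (∀ x, 2 * R < ‖x‖ → lap N φ x = 0) ∧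
    ∀ x, |lap N φ x| ≤ K * (R ^ 2)⁻¹ := by
  let b : ContDiffBump (0 : Euc N) := ⟨1, 2, by norm_num, by norm_num⟩
  have hb2 : ContDiff ℝ 2 (b : Euc N → ℝ) := b.contDiff
  have hin : ∀ x : Euc N, ‖x‖ < 1 → lap N b x = 0 := fun x hx => by
    refine lap_zero_of_eventuallyEq (c := 1) ?_
    filter_upwards [isOpen_ball.mem_nhds (show x ∈ ball (0 : Euc N) 1 by simpa using hx)] with y hy
    exact b.one_of_mem_closedBall (ball_subset_closedBall hy)
  have hout : ∀ x : Euc N, 2 < ‖x‖ → lap N b x = 0 := fun x hx => by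
    refine lap_zero_of_eventuallyEq (c := 0) ?_
    filter_upwards [(isOpen_lt continuous_const continuous_norm).mem_nhds hx] with y hy
    refine b.zero_of_le_dist ?_
    have : 2 < ‖y‖ := hy
    simpa [b] using this.le
  obtain ⟨K, hK⟩ := (isCompact_closedBall (0 : Euc N) 2).exists_bound_of_continuousOn
    (continuous_lap hb2).continuousOn
  have hKall : ∀ x : Euc N, |lap N b x| ≤ max K 0 := fun x => by
    by_cases hx : ‖x‖ ≤ 2
    · exact (hK x (by simpa using hx)).trans (le_max_left _ _)
    · rw [hout x (not_le.1 hx)]; simp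
  refine ⟨max K 0, le_max_right _ _, fun R hR => ⟨fun y => b (R⁻¹ • y), ?_, ?_, fun x => b.nonneg,
    fun x => b.le_one, ?_, ?_, ?_, ?_⟩⟩
  · exact hb2.comp (contDiff_const_smul R⁻¹)
  · exact b.hasCompactSupport.comp_smul (inv_ne_zero hR.ne')
  · intro x hx
    refine b.one_of_mem_closedBall ?_
    simp only [mem_closedBall, dist_zero_right, norm_smul, norm_inv, Real.norm_of_nonneg hR.le, b]
    rw [inv_mul_le_iff₀ hR]; linarith
  · intro x hx
    rw [lap_scale, hin, mul_zero]
    rw [norm_smul, norm_inv, Real.norm_of_nonneg hR.le, inv_mul_lt_iff₀ hR]; linarith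
  · intro x hx
    rw [lap_scale, hout, mul_zero]
    rw [norm_smul, norm_inv, Real.norm_of_nonneg hR.le, lt_inv_mul_iff₀ hR]; linarith
  · intro x
    rw [lap_scale, abs_mul, mul_comm, inv_pow, abs_of_nonneg (a := (R ^ 2)⁻¹) (by positivity)]
    exact mul_le_mul_of_nonneg_right (hKall (R⁻¹ • x)) (by positivity)

lemma lap_term_bound {N : ℕ} {u φ : Euc N → ℝ} (hpos : ∀ x, 0 < u x) {C R K : ℝ}
    (hC : 0 ≤ C) (hK : 0 ≤ K) (hN : 3 ≤ N)
    (hR : 0 < R) (hb : ∀ x : Euc N, R ≤ ‖x‖ → u x ≤ C * (‖x‖ ^ 2) ^ (-((N : ℝ) - 2) / 2))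
    (h1 : ∀ x, ‖x‖ < R → lap N φ x = 0) (h2 : ∀ x, 2 * R < ‖x‖ → lap N φ x = 0)
    (h3 : ∀ x, |lap N φ x| ≤ K * (R ^ 2)⁻¹) :
    ∫ x, lap N φ x * u x ≤ K * C * 2 ^ N * volume.real (ball (0 : Euc N) 1) := by
  have hN' : (3 : ℝ) ≤ N := by exact_mod_cast hN
  have hpt : ∀ x, ‖lap N φ x * u x‖ ≤ K * (R ^ 2)⁻¹ * (C * (R ^ 2) ^ (-((N : ℝ) - 2) / 2)) := by
    intro x
    by_cases hx : ‖x‖ < R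
    · rw [h1 x hx]; simp; positivity
    · have hx' := not_lt.1 hx
      rw [norm_mul, Real.norm_eq_abs, Real.norm_of_nonneg (hpos x).le]
      refine mul_le_mul (h3 x) ((hb x hx').trans ?_) (hpos x).le (by positivity)
      refine mul_le_mul_of_nonneg_left ?_ hC
      exact Real.rpow_le_rpow_of_nonpos (by positivity) (by gcongr) (by linarith)
  have hset : ∫ x in closedBall (0 : Euc N) (2 * R), lap N φ x * u x = ∫ x, lap N φ x * u x := by
    refine setIntegral_eq_integral_of_forall_compl_eq_zero fun x hx => ?_
    rw [h2 x (by simpa using hx), zero_mul]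
  rw [← hset]
  refine (le_abs_self _).trans ?_
  rw [← Real.norm_eq_abs]
  refine (norm_setIntegral_le_of_norm_le_const measure_closedBall_lt_top
    (fun x _ => hpt x)).trans (le_of_eq ?_)
  rw [Measure.addHaar_real_closedBall _ _ (by positivity)]
  have e : (R ^ 2)⁻¹ * (R ^ 2) ^ (-((N : ℝ) - 2) / 2) * R ^ N = 1 := by
    have : (R ^ 2) ^ (-((N : ℝ) - 2) / 2) = R ^ 2 * (R ^ N)⁻¹ := by
      rw [← Real.rpow_natCast R 2, ← Real.rpow_mul hR.le, ← Real.rpow_natCast R N,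
        ← Real.rpow_neg hR.le, ← Real.rpow_add hR]
      congr 1; push_cast; ring
    rw [this]
    field_simp
  simp only [finrank_euclideanSpace, Fintype.card_fin, mul_pow]
  linear_combination (K * C * 2 ^ N * volume.real (ball (0 : Euc N) 1)) * e

/-- for any solution `u` of `(P_λ)`, the functions `V⁺ u`, `V⁻ u` and `f(u)`
are integrable on `ℝ^N`. -/
theorem stmt9 (N : ℕ) (hN : 3 ≤ N) (V V₁ V₂ : Euc N → ℝ)
    (hV : CondV N V V₁ V₂) (hdec : CondVDecay N V)
    (f : ℝ → ℝ) (hf : CondF N V f)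
    (lam : ℝ) (hlam : 0 < lam)
    (u : Euc N → ℝ) (hu : IsSolution N V f lam u) :
    Integrable (fun x : Euc N => max (V x) 0 * u x) ∧
    Integrable (fun x : Euc N => max (-V x) 0 * u x) ∧
    Integrable (fun x : Euc N => f (u x)) := by
  obtain ⟨⟨Ch, β, hβ, -, hHol⟩, -, -, -, -, -⟩ := hV
  have hVc : Continuous V := hHol.continuous hβ
  obtain ⟨hfc1, hfn, -⟩ := hf
  have hfc : Continuous f := hfc1.continuous
  have huc : Continuous u := hu.smooth.continuous
  have hsub : ∀ x, - lap N u x ≤ lam * (max (V x) 0 * u x) := fun x => by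
    rw [hu.eqn x]
    refine mul_le_mul_of_nonneg_left ?_ hlam.le
    have h1 := hfn (u x) (hu.pos x).le
    have h2 := mul_le_mul_of_nonneg_right (le_max_left (V x) 0) (hu.pos x).le
    linarith
  obtain ⟨C, R0, hC, hR0, hb⟩ := decay_bound hN hdec hlam hu.smooth hu.pos hu.decay hsub
  have hVp := integrable_Vplus hVc hdec huc hu.pos hC hR0 hb
  obtain ⟨K, hK, hcut⟩ := cutoff (N := N)
  have hVm0 : ∀ x, 0 ≤ max (-V x) 0 * u x := fun x => mul_nonneg (le_max_right _ _) (hu.pos x).le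
  have hf0 : ∀ x, 0 ≤ f (u x) := fun x => hfn _ (hu.pos x).le
  have hVmc : Continuous (fun x => max (-V x) 0 * u x) := by fun_prop
  have hfuc : Continuous (fun x => f (u x)) := hfc.comp huc
  set g : Euc N → ℝ := fun x => lam * (max (-V x) 0 * u x + f (u x)) with hg
  have hgc : Continuous g := continuous_const.mul (hVmc.add hfuc)
  have hg0 : ∀ x, 0 ≤ g x := fun x => mul_nonneg hlam.le (add_nonneg (hVm0 x) (hf0 x))
  have hgeq : ∀ x, g x = lam * (max (V x) 0 * u x) + lap N u x := fun x => by
    have h1 := hu.eqn x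
    have h2 : max (V x) 0 - max (-V x) 0 = V x := by
      rcases le_total 0 (V x) with h | h
      · rw [max_eq_left h, max_eq_right (by linarith)]; ring
      · rw [max_eq_right h, max_eq_left (by linarith)]; ring
    simp only [hg]
    linear_combination h1 - lam * u x * h2
  have hgi : Integrable g := by
    refine (aecover_closedBall (μ := volume) (x := (0 : Euc N))
      (tendsto_id (x := atTop (α := ℝ)))).integrable_of_integral_bounded_of_nonneg_ae
      (lam * (∫ x, max (V x) 0 * u x) + K * C * 2 ^ N * volume.real (ball (0 : Euc N) 1))
      (fun R => hgc.continuousOn.integrableOn_compact (isCompact_closedBall _ _))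
      (ae_of_all _ hg0) ?_
    filter_upwards [eventually_ge_atTop R0] with R hR
    have hRp : 0 < R := by linarith
    obtain ⟨φ, hφ, hφs, hφ0, hφ1, hφin, hl1, hl2, hl3⟩ := hcut R hRp
    have hlb := lap_term_bound hu.pos hC hK hN hRp (fun x hx => hb x (hR.trans hx)) hl1 hl2 hl3
    rw [← ibp_lap hu.smooth hφ hφs] at hlb
    have hi1 : Integrable (fun x => φ x * lap N u x) :=
      (hφ.continuous.mul (continuous_lap hu.smooth)).integrable_of_hasCompactSupport hφs.mul_right
    have hi2 : Integrable (fun x => φ x * (lam * (max (V x) 0 * u x))) :=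
      (hφ.continuous.mul (by fun_prop)).integrable_of_hasCompactSupport hφs.mul_right
    have hi3 : Integrable (fun x => φ x * g x) :=
      (hφ.continuous.mul hgc).integrable_of_hasCompactSupport hφs.mul_right
    calc ∫ x in closedBall (0 : Euc N) (id R), g x
        = ∫ x in closedBall (0 : Euc N) R, φ x * g x := by
          refine setIntegral_congr_fun isClosed_closedBall.measurableSet fun x hx => ?_
          rw [hφin x (by simpa using hx), one_mul]
      _ ≤ ∫ x, φ x * g x :=
          setIntegral_le_integral hi3 (ae_of_all _ fun x => mul_nonneg (hφ0 x) (hg0 x))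
      _ = (∫ x, φ x * (lam * (max (V x) 0 * u x))) + ∫ x, φ x * lap N u x := by
          rw [← integral_add hi2 hi1]
          refine integral_congr_ae (ae_of_all _ fun x => ?_)
          simp only [hgeq x]; ring
      _ ≤ (∫ x, lam * (max (V x) 0 * u x)) + ∫ x, φ x * lap N u x := by
          gcongr ?_ + _
          refine integral_mono hi2 (hVp.const_mul lam) fun x => ?_
          have : 0 ≤ lam * (max (V x) 0 * u x) :=
            mul_nonneg hlam.le (mul_nonneg (le_max_right _ _) (hu.pos x).le)
          exact mul_le_of_le_one_left this (hφ1 x)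
      _ ≤ _ := by
          rw [integral_const_mul]
          linarith
  have hgi' : Integrable (fun x => max (-V x) 0 * u x + f (u x)) := by
    have := hgi.const_mul lam⁻¹
    refine this.congr (ae_of_all _ fun x => ?_)
    simp only [hg]
    field_simp
  refine ⟨hVp, hgi'.mono' hVmc.aestronglyMeasurable (ae_of_all _ fun x => ?_),
    hgi'.mono' hfuc.aestronglyMeasurable (ae_of_all _ fun x => ?_)⟩
  · rw [Real.norm_of_nonneg (hVm0 x)]; linarith [hf0 x]
  · rw [Real.norm_of_nonneg (hf0 x)]; linarith [hVm0 x]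

end
end
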